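/- Let 1 ≤ r < ∞ and let W be a graphon whose randomness support graphon 1_{rand(W)} is K_{r+1}-free. Then Ent(W) ≤ 1 - 1/r, with equality if and only if there exists a graphon W' ∈ R_r with δ_□(W, W') = 0. -/

import Mathlib

open MeasureTheory Set Filter

noncomputable section

/-- A graphon: a symmetric measurable function `ℝ → ℝ → ℝ` with values in `[0,1]`
(only its values on `[0,1]²` matter). -/
def IsGraphon (W : ℝ → ℝ → ℝ) : Prop :=
  (∀ x y, W x y = W y x) ∧ Measurable (Function.uncurry W) ∧
    ∀ x y, W x y ∈ Set.Icc (0 : ℝ) 1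

/-- The cut norm `‖U‖_□`, the supremum over measurable `S, T ⊆ [0,1]` of
`|∫_{S×T} U|`. -/
def cutNorm (U : ℝ → ℝ → ℝ) : ℝ :=
  sSup { r : ℝ | ∃ S T : Set ℝ, MeasurableSet S ∧ MeasurableSet T ∧
    S ⊆ Set.Icc 0 1 ∧ T ⊆ Set.Icc 0 1 ∧
    r = |∫ p in S ×ˢ T, U p.1 p.2| }

/-- `d_□(W₁, W₂) = ‖W₁ - W₂‖_□`. -/
def dCut (W₁ W₂ : ℝ → ℝ → ℝ) : ℝ := cutNorm (fun x y => W₁ x y - W₂ x y)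

/-- A Lebesgue-measure-preserving map `[0,1] → [0,1]`. -/
def IsMPSelf (σ : ℝ → ℝ) : Prop :=
  MeasureTheory.MeasurePreserving σ
      (MeasureTheory.volume.restrict (Set.Icc (0:ℝ) 1))
      (MeasureTheory.volume.restrict (Set.Icc (0:ℝ) 1)) ∧
    Set.MapsTo σ (Set.Icc (0:ℝ) 1) (Set.Icc (0:ℝ) 1)

/-- The cut distance `δ_□(W₁, W₂)`. -/
def deltaCut (W₁ W₂ : ℝ → ℝ → ℝ) : ℝ :=
  sInf { r : ℝ | ∃ σ₁ σ₂ : ℝ → ℝ, IsMPSelf σ₁ ∧ IsMPSelf σ₂ ∧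
    r = cutNorm (fun x y => W₁ (σ₁ x) (σ₁ y) - W₂ (σ₂ x) (σ₂ y)) }

/-- The binary entropy function `h` (base-2 logarithm; `logb 2 0 = 0` by convention,
so `h 0 = h 1 = 0`). -/
def binEnt (x : ℝ) : ℝ := -x * Real.logb 2 x - (1 - x) * Real.logb 2 (1 - x)

/-- `h̃ x = h (min x (1/2))`. -/
def htilde (x : ℝ) : ℝ := binEnt (min x (1/2))

/-- The entropy `Ent(W) = ∫₀¹∫₀¹ h(W(x,y)) dx dy` of a graphon. -/
def graphonEnt (W : ℝ → ℝ → ℝ) : ℝ :=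
  ∫ x in Set.Icc (0:ℝ) 1, ∫ y in Set.Icc (0:ℝ) 1, binEnt (W x y)

open Classical in
/-- The graphon `W_G` of a simple graph `G` on `{1, …, n}` (vertices as `Fin n`,
vertex `i : Fin n` representing `i+1`): `W_G x y = 1` iff `⌈nx⌉⌈ny⌉ ∈ E(G)`. -/
def graphonOfGraph {n : ℕ} (G : SimpleGraph (Fin n)) : ℝ → ℝ → ℝ := fun x y =>
  if ∃ i j : Fin n, G.Adj i j ∧ ⌈(n : ℝ) * x⌉ = ((i : ℕ) : ℤ) + 1 ∧
      ⌈(n : ℝ) * y⌉ = ((j : ℕ) : ℤ) + 1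
  then 1 else 0

/-- A labelled graph class: a set of graphs on `{1,…,n}` for each `n`. -/
abbrev GraphClass := ∀ n : ℕ, Set (SimpleGraph (Fin n))

/-- A graph class is closed under relabelling by permutations. -/
def IsGraphClass (Q : GraphClass) : Prop :=
  ∀ (n : ℕ) (π : Equiv.Perm (Fin n)) (G : SimpleGraph (Fin n)),
    G ∈ Q n → G.comap ⇑π ∈ Q n

/-- A hereditary graph class: a graph class closed under taking induced subgraphs
(relabelled by the order-preserving bijection). -/
def IsHereditary (Q : GraphClass) : Prop :=
  IsGraphClass Q ∧
    ∀ (m n : ℕ) (f : Fin m → Fin n), StrictMono f →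
      ∀ G ∈ Q n, G.comap f ∈ Q m

/-- `Q̂`: the set of graphons which are limits (in cut distance) of sequences of graphs in
the class `Q` whose orders tend to infinity. -/
def limitSet (Q : GraphClass) : Set (ℝ → ℝ → ℝ) :=
  { W | IsGraphon W ∧
    ∃ (nk : ℕ → ℕ) (Gk : ∀ k, SimpleGraph (Fin (nk k))),
      (∀ k, Gk k ∈ Q (nk k)) ∧ Filter.Tendsto nk Filter.atTop Filter.atTop ∧
      Filter.Tendsto (fun k => deltaCut (graphonOfGraph (Gk k)) W) Filter.atTop (nhds 0) }

/-- `C(n,2) = n(n-1)/2` as a real number. -/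
def choose2 (n : ℕ) : ℝ := (n : ℝ) * ((n : ℝ) - 1) / 2

open Classical in
/-- The step function `E[W | P]` obtained by averaging `W` over the products of the
parts of the partition `P` of `[0,1]`. -/
def condExpPart {k : ℕ} (P : Fin k → Set ℝ) (W : ℝ → ℝ → ℝ) : ℝ → ℝ → ℝ := fun x y =>
  ∑ i : Fin k, ∑ j : Fin k,
    if x ∈ P i ∧ y ∈ P j then ⨍ p in (P i) ×ˢ (P j), W p.1 p.2 else 0

/-- `W̄_n`: the step function of `W` for the partition of `[0,1]` into `n` consecutive
intervals of length `1/n`. -/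
def barStep (n : ℕ) (W : ℝ → ℝ → ℝ) : ℝ → ℝ → ℝ :=
  condExpPart (fun i : Fin n => Set.Ioc (((i : ℕ) : ℝ)/n) ((((i : ℕ) : ℝ) + 1)/n)) W

/-- `N̂_□(n, δ; W)`: the number of graphs `G` on `{1,…,n}` with `d_□(W_G, W) ≤ δ`. -/
def NhatCut (n : ℕ) (δ : ℝ) (W : ℝ → ℝ → ℝ) : ℕ :=
  Nat.card {G : SimpleGraph (Fin n) // dCut (graphonOfGraph G) W ≤ δ}

/-- `N_□(n, δ; W)`: the number of graphs `G` on `{1,…,n}` with `δ_□(W_G, W) ≤ δ`. -/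
def NCut (n : ℕ) (δ : ℝ) (W : ℝ → ℝ → ℝ) : ℕ :=
  Nat.card {G : SimpleGraph (Fin n) // deltaCut (graphonOfGraph G) W ≤ δ}

open Classical in
/-- The induced density `p(F; W)` of a graph `F` on `{1,…,k}` in a graphon `W`. -/
def inducedDensity {k : ℕ} (F : SimpleGraph (Fin k)) (W : ℝ → ℝ → ℝ) : ℝ :=
  ∫ x : Fin k → ℝ in Set.univ.pi (fun _ : Fin k => Set.Icc (0:ℝ) 1),
    ∏ i : Fin k, ∏ j : Fin k,
      if i < j then (if F.Adj i j then W (x i) (x j) else 1 - W (x i) (x j)) else 1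

open Classical in
/-- The randomness support graphon `1_{rand(W)}` of `W`. -/
def randIndicator (W : ℝ → ℝ → ℝ) : ℝ → ℝ → ℝ := fun x y =>
  if 0 < W x y ∧ W x y < 1 then 1 else 0

/-- A kernel `U` is `K_r`-free if `∏_{i<j} U(x_i, x_j) = 0` for a.e. `x ∈ [0,1]^r`. -/
def KFree (r : ℕ) (U : ℝ → ℝ → ℝ) : Prop :=
  ∀ᵐ x ∂(MeasureTheory.volume.restrict (Set.univ.pi fun _ : Fin r => Set.Icc (0:ℝ) 1)),
    (∏ i : Fin r, ∏ j : Fin r, if i < j then U (x i) (x j) else 1) = 0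

open Classical in
/-- The graphon `W^{(r,s)}`: equal to `1/2` off the diagonal blocks, `1` on the first `s`
diagonal blocks `I_i × I_i`, and `0` on the remaining diagonal blocks. -/
def Wrs (r s : ℕ) : ℝ → ℝ → ℝ := fun x y =>
  if ∃ i j : Fin r, i ≠ j ∧ x ∈ Set.Ioc (((i:ℕ):ℝ)/r) ((((i:ℕ):ℝ)+1)/r) ∧
      y ∈ Set.Ioc (((j:ℕ):ℝ)/r) ((((j:ℕ):ℝ)+1)/r)
  then 1/2
  else if ∃ i : Fin r, (i:ℕ) < s ∧ x ∈ Set.Ioc (((i:ℕ):ℝ)/r) ((((i:ℕ):ℝ)+1)/r) ∧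
      y ∈ Set.Ioc (((i:ℕ):ℝ)/r) ((((i:ℕ):ℝ)+1)/r)
  then 1 else 0

/-- `E_r = ⋃_{i ≠ j} I_i × I_j` where `I_i`, `i = 1, …, r`, are the consecutive
intervals of length `1/r` in `[0,1]`. -/
def Er (r : ℕ) : Set (ℝ × ℝ) :=
  ⋃ (i : Fin r) (j : Fin r) (_ : i ≠ j),
    (Set.Ioc (((i:ℕ):ℝ)/r) ((((i:ℕ):ℝ)+1)/r)) ×ˢ (Set.Ioc (((j:ℕ):ℝ)/r) ((((j:ℕ):ℝ)+1)/r))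

/-- `R_r`: the set of graphons equal to `1/2` on `E_r` and `{0,1}`-valued elsewhere
on `[0,1]²`. -/
def Rset (r : ℕ) : Set (ℝ → ℝ → ℝ) :=
  { W | IsGraphon W ∧ (∀ p ∈ Er r, W p.1 p.2 = 1/2) ∧
      ∀ p ∈ ((Set.Icc (0:ℝ) 1) ×ˢ (Set.Icc (0:ℝ) 1)) \ Er r,
        W p.1 p.2 = 0 ∨ W p.1 p.2 = 1 }

/-- A graphon is random-free if it is `{0,1}`-valued a.e. on `[0,1]²`. -/
def IsRandomFree (W : ℝ → ℝ → ℝ) : Prop :=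
  ∀ᵐ p ∂(MeasureTheory.volume.restrict ((Set.Icc (0:ℝ) 1) ×ˢ (Set.Icc (0:ℝ) 1))),
    W (Prod.fst p) (Prod.snd p) = 0 ∨ W (Prod.fst p) (Prod.snd p) = 1



/-! ### Turan theorem for measurable graphs -/

section Turan

variable {Ω : Type*} [MeasurableSpace Ω]

/-- Almost everywhere clique-freeness. -/
def CF (n : ℕ) (μ : Measure Ω) (a : Ω → Ω → ℝ) : Prop :=
  ∀ᵐ x ∂(Measure.pi fun _ : Fin n => μ), ∃ i j, i < j ∧ a (x i) (x j) = 0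

/-- A measurable `{0,1}`-valued symmetric kernel. -/
structure ZO (a : Ω → Ω → ℝ) : Prop where
  symm : ∀ x y, a x y = a y x
  meas : Measurable (Function.uncurry a)
  zo : ∀ x y, a x y = 0 ∨ a x y = 1

lemma cf_succ {n : ℕ} {μ : Measure Ω} [IsFiniteMeasure μ] {a : Ω → Ω → ℝ} (ha : ZO a)
    (h : CF (n + 1) μ a) : ∀ᵐ x ∂μ, CF n (μ.restrict {y | a x y = 1}) a := by
  unfold CF at h
  have e := (measurePreserving_piFinSuccAbove (fun _ : Fin (n+1) => μ) 0).symm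
  have h2 := e.quasiMeasurePreserving.ae h
  have h3 := Measure.ae_ae_of_ae_prod h2
  filter_upwards [h3] with x hx
  unfold CF
  have hN : MeasurableSet {y | a x y = 1} := by
    have : Measurable (fun y => a x y) := ha.meas.comp (measurable_const.prodMk measurable_id)
    exact this (measurableSet_singleton 1)
  rw [← Measure.restrict_pi_pi, ae_restrict_iff' (MeasurableSet.univ_pi (fun _ => hN))]
  filter_upwards [hx] with y hy hyN
  obtain ⟨i, j, hij, h0⟩ := hy
  simp only [MeasurableEquiv.piFinSuccAbove] at h0
  rcases Fin.eq_zero_or_eq_succ i with rfl | ⟨i, rfl⟩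
  · rcases Fin.eq_zero_or_eq_succ j with rfl | ⟨j, rfl⟩
    · exact absurd hij (lt_irrefl _)
    · simp at h0
      have := hyN j (Set.mem_univ _)
      simp at this
      rw [h0] at this; norm_num at this
  · rcases Fin.eq_zero_or_eq_succ j with rfl | ⟨j, rfl⟩
    · exact absurd hij (by simp)
    · simp at h0
      exact ⟨i, j, by simpa using hij, h0⟩

lemma bddInt {μ : Measure Ω} [IsFiniteMeasure μ] {f : Ω → ℝ} (hf : Measurable f) (C : ℝ)
    (hC : ∀ x, |f x| ≤ C) : Integrable f μ :=
  Integrable.of_bound hf.aestronglyMeasurable C (ae_of_all _ hC)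

lemma isub {μ : Measure Ω} {f g : Ω → ℝ} (hf : Integrable f μ) (hg : Integrable g μ) :
    Integrable (fun x => f x - g x) μ := hf.sub hg

lemma ZO.abs_le {a : Ω → Ω → ℝ} (ha : ZO a) (x y : Ω) : |a x y| ≤ 1 := by
  rcases ha.zo x y with h | h <;> rw [h] <;> norm_num

lemma ZO.nonneg {a : Ω → Ω → ℝ} (ha : ZO a) (x y : Ω) : 0 ≤ a x y := by
  rcases ha.zo x y with h | h <;> rw [h]; norm_num

lemma ZO.le_one {a : Ω → Ω → ℝ} (ha : ZO a) (x y : Ω) : a x y ≤ 1 := by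
  rcases ha.zo x y with h | h <;> rw [h]; norm_num

lemma ZO.meas2 {a : Ω → Ω → ℝ} (ha : ZO a) (x : Ω) : Measurable (a x) :=
  ha.meas.comp (measurable_const.prodMk measurable_id)

/-- degree -/
def dg (μ : Measure Ω) (a : Ω → Ω → ℝ) (x : Ω) : ℝ := ∫ y, a x y ∂μ
/-- codegree -/
def cd (μ : Measure Ω) (a : Ω → Ω → ℝ) (x y : Ω) : ℝ := ∫ z, a x z * a y z ∂μ
/-- common non-neighbours -/
def cn (μ : Measure Ω) (a : Ω → Ω → ℝ) (x y : Ω) : ℝ := ∫ z, (1 - a x z) * (1 - a y z) ∂μ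
/-- rooted triangles -/
def tr (μ : Measure Ω) (a : Ω → Ω → ℝ) (x : Ω) : ℝ := ∫ y, a x y * cd μ a x y ∂μ

lemma abs_int_le {μ : Measure Ω} [IsFiniteMeasure μ] {f : Ω → ℝ} {C : ℝ}
    (hC : ∀ x, |f x| ≤ C) : |∫ x, f x ∂μ| ≤ C * μ.real univ :=
  norm_integral_le_of_norm_le_const (f := f) (ae_of_all μ hC)

variable (μ : Measure Ω) [IsFiniteMeasure μ] {a : Ω → Ω → ℝ}

lemma dg_meas (ha : ZO a) : Measurable (dg μ a) :=
  (ha.meas.stronglyMeasurable.integral_prod_right (ν := μ)).measurable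

lemma dg_abs (ha : ZO a) (x : Ω) : |dg μ a x| ≤ μ.real univ := by
  have := abs_int_le (μ := μ) (fun y => ha.abs_le x y)
  rw [one_mul] at this; exact this

lemma cd_meas (ha : ZO a) : Measurable (Function.uncurry (cd μ a)) := by
  have h : Measurable (fun q : (Ω × Ω) × Ω => a q.1.1 q.2 * a q.1.2 q.2) :=
    (ha.meas.comp (measurable_fst.fst.prodMk measurable_snd)).mul
      (ha.meas.comp (measurable_fst.snd.prodMk measurable_snd))
  exact (h.stronglyMeasurable.integral_prod_right' (ν := μ)).measurable

lemma cd_abs (ha : ZO a) (x y : Ω) : |cd μ a x y| ≤ μ.real univ := by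
  have := abs_int_le (μ := μ) (f := fun z => a x z * a y z) (C := 1) (fun z => by
    rw [abs_mul]; exact mul_le_one₀ (ha.abs_le _ _) (abs_nonneg _) (ha.abs_le _ _))
  rw [one_mul] at this; exact this

lemma cn_nonneg (ha : ZO a) (x y : Ω) : 0 ≤ cn μ a x y :=
  integral_nonneg fun z => mul_nonneg (by simpa using ha.le_one x z) (by simpa using ha.le_one y z)

lemma cn_eq (ha : ZO a) (x y : Ω) :
    cn μ a x y = μ.real univ - dg μ a x - dg μ a y + cd μ a x y := by
  unfold cn dg cd
  have i1 : ∀ x, Integrable (a x) μ := fun x => bddInt (ha.meas2 x) 1 (ha.abs_le x)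
  have i2 : Integrable (fun z => a x z * a y z) μ :=
    bddInt ((ha.meas2 x).mul (ha.meas2 y)) 1 (fun z => by
      rw [abs_mul]; exact mul_le_one₀ (ha.abs_le _ _) (abs_nonneg _) (ha.abs_le _ _))
  have : ∀ z, (1 - a x z) * (1 - a y z) = 1 - a x z - a y z + a x z * a y z := fun z => by ring
  simp_rw [this]
  rw [integral_add (isub (isub (integrable_const 1) (i1 x)) (i1 y)) i2,
    integral_sub (isub (integrable_const 1) (i1 x)) (i1 y),
    integral_sub (integrable_const 1) (i1 x)]
  simp

lemma cn_meas (ha : ZO a) : Measurable (Function.uncurry (cn μ a)) := by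
  have : Function.uncurry (cn μ a) = fun q : Ω × Ω =>
      μ.real univ - dg μ a q.1 - dg μ a q.2 + Function.uncurry (cd μ a) q := by
    ext q; exact cn_eq μ ha q.1 q.2
  rw [this]
  exact (((measurable_const).sub ((dg_meas μ ha).comp measurable_fst)).sub
    ((dg_meas μ ha).comp measurable_snd)).add (cd_meas μ ha)

lemma tr_meas (ha : ZO a) : Measurable (tr μ a) := by
  have h : Measurable (fun q : Ω × Ω => a q.1 q.2 * cd μ a q.1 q.2) :=
    ha.meas.mul (cd_meas μ ha)
  exact (h.stronglyMeasurable.integral_prod_right' (ν := μ)).measurable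

lemma acd_abs (ha : ZO a) (x y : Ω) : |a x y * cd μ a x y| ≤ μ.real univ := by
  rw [abs_mul]
  calc _ ≤ 1 * μ.real univ :=
        mul_le_mul (ha.abs_le _ _) (cd_abs μ ha _ _) (abs_nonneg _) zero_le_one
    _ = _ := one_mul _

lemma tr_abs (ha : ZO a) (x : Ω) : |tr μ a x| ≤ μ.real univ * μ.real univ :=
  abs_int_le (acd_abs μ ha x)

lemma dg_sq_int (ha : ZO a) : Integrable (fun x => dg μ a x ^ 2) μ :=
  bddInt ((dg_meas μ ha).pow_const 2) (μ.real univ ^ 2) fun x => by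
    rw [abs_pow]; exact pow_le_pow_left₀ (abs_nonneg _) (dg_abs μ ha x) 2

/-- Goodman-type identity. -/
lemma goodman (ha : ZO a) :
    ∫ x, ∫ y, a x y * cn μ a x y ∂μ ∂μ =
      μ.real univ * (∫ x, dg μ a x ∂μ) - 2 * (∫ x, dg μ a x ^ 2 ∂μ) + ∫ x, tr μ a x ∂μ := by
  have i1 : ∀ x, Integrable (a x) μ := fun x => bddInt (ha.meas2 x) 1 (ha.abs_le x)
  have i2 : ∀ x, Integrable (fun y => a x y * dg μ a y) μ := fun x =>
    bddInt ((ha.meas2 x).mul (dg_meas μ ha)) (1 * μ.real univ) fun y => by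
      rw [abs_mul]
      exact mul_le_mul (ha.abs_le _ _) (dg_abs μ ha _) (abs_nonneg _) zero_le_one
  have i3 : ∀ x, Integrable (fun y => a x y * cd μ a x y) μ := fun x =>
    bddInt ((ha.meas2 x).mul ((cd_meas μ ha).comp (measurable_const.prodMk measurable_id)))
      (μ.real univ) (acd_abs μ ha x)
  have e1 : ∀ x, ∫ y, a x y * cn μ a x y ∂μ =
      μ.real univ * dg μ a x - dg μ a x ^ 2 - (∫ y, a x y * dg μ a y ∂μ) + tr μ a x := by
    intro x
    have : ∀ y, a x y * cn μ a x y =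
        (μ.real univ - dg μ a x) * a x y - a x y * dg μ a y + a x y * cd μ a x y := fun y => by
      rw [cn_eq μ ha]; ring
    simp_rw [this]
    rw [integral_add (isub ((i1 x).const_mul _) (i2 x)) (i3 x),
      integral_sub ((i1 x).const_mul _) (i2 x), integral_const_mul]
    simp only [tr, dg]; ring
  have m4 : Measurable (fun q : Ω × Ω => a q.1 q.2 * dg μ a q.2) :=
    ha.meas.mul ((dg_meas μ ha).comp measurable_snd)
  have b4 : ∀ q : Ω × Ω, |a q.1 q.2 * dg μ a q.2| ≤ 1 * μ.real univ := fun q => by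
    rw [abs_mul]
    exact mul_le_mul (ha.abs_le _ _) (dg_abs μ ha _) (abs_nonneg _) zero_le_one
  have i4 : Integrable (fun x => ∫ y, a x y * dg μ a y ∂μ) μ :=
    bddInt (m4.stronglyMeasurable.integral_prod_right' (ν := μ)).measurable _
      fun x => abs_int_le fun y => b4 (x, y)
  have e2 : ∫ x, ∫ y, a x y * dg μ a y ∂μ ∂μ = ∫ x, dg μ a x ^ 2 ∂μ := by
    rw [integral_integral_swap (f := fun x y => a x y * dg μ a y) (bddInt m4 _ b4)]
    congr 1; ext y
    rw [integral_mul_const, sq]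
    simp_rw [fun x => ha.symm x y]; rfl
  have i5 : Integrable (dg μ a) μ := bddInt (dg_meas μ ha) _ (dg_abs μ ha)
  simp_rw [e1]
  rw [integral_add (isub (isub (i5.const_mul _) (dg_sq_int μ ha)) i4)
      (bddInt (tr_meas μ ha) _ (tr_abs μ ha)),
    integral_sub (isub (i5.const_mul _) (dg_sq_int μ ha)) i4,
    integral_sub (i5.const_mul _) (dg_sq_int μ ha), integral_const_mul, e2]
  ring

lemma var_id (ha : ZO a) (c : ℝ) : ∫ x, (dg μ a x - c) ^ 2 ∂μ =
    (∫ x, dg μ a x ^ 2 ∂μ) - 2 * c * (∫ x, dg μ a x ∂μ) + c ^ 2 * μ.real univ := by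
  have i5 : Integrable (dg μ a) μ := bddInt (dg_meas μ ha) _ (dg_abs μ ha)
  have : ∀ x, (dg μ a x - c) ^ 2 = dg μ a x ^ 2 - 2 * c * dg μ a x + c ^ 2 := fun x => by ring
  simp_rw [this]
  rw [integral_add (isub (dg_sq_int μ ha) (i5.const_mul _)) (integrable_const _),
    integral_sub (dg_sq_int μ ha) (i5.const_mul _), integral_const_mul]
  simp; ring

lemma nbr_int (ha : ZO a) (x : Ω) (f : Ω → ℝ) :
    ∫ y in {y | a x y = 1}, f y ∂μ = ∫ y, a x y * f y ∂μ := by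
  have hm : MeasurableSet {y | a x y = 1} := ha.meas2 x (measurableSet_singleton 1)
  rw [← integral_indicator hm]
  congr 1; ext y
  by_cases h : a x y = 1
  · rw [Set.indicator_of_mem (by exact h), h, one_mul]
  · rw [Set.indicator_of_notMem (by exact h), (ha.zo x y).resolve_right h, zero_mul]

lemma restr_dens (ha : ZO a) (x : Ω) :
    ∫ y, dg (μ.restrict {y | a x y = 1}) a y ∂(μ.restrict {y | a x y = 1}) = tr μ a x := by
  rw [nbr_int μ ha]
  unfold tr cd dg
  congr 1; ext y
  rw [nbr_int μ ha]

lemma restr_mass (ha : ZO a) (x : Ω) :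
    (μ.restrict {y | a x y = 1}).real univ = dg μ a x := by
  have := nbr_int μ ha x (fun _ => 1)
  simpa [dg] using this

lemma cs (ha : ZO a) : (∫ x, dg μ a x ∂μ) ^ 2 ≤ μ.real univ * ∫ x, dg μ a x ^ 2 ∂μ := by
  set m := μ.real univ
  have hm : 0 ≤ m := measureReal_nonneg
  rcases hm.eq_or_lt with h | h
  · have : |∫ x, dg μ a x ∂μ| ≤ m * m := abs_int_le (dg_abs μ ha)
    rw [← h] at this ⊢
    have : (∫ x, dg μ a x ∂μ) = 0 := by simpa using this
    rw [this]; simp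
  · have h1 : 0 ≤ ∫ x, (dg μ a x - (∫ x, dg μ a x ∂μ) / m) ^ 2 ∂μ :=
      integral_nonneg fun x => sq_nonneg _
    rw [var_id μ ha] at h1
    set p := ∫ x, dg μ a x ∂μ
    set D := ∫ x, dg μ a x ^ 2 ∂μ
    have : m * (D - 2 * (p / m) * p + (p / m) ^ 2 * m) = m * D - p ^ 2 := by field_simp; ring
    have := mul_nonneg hm h1
    linarith

end Turan

theorem turan {Ω : Type*} [MeasurableSpace Ω] {a : Ω → Ω → ℝ} (ha : ZO a) (r : ℕ) : ∀ (μ : Measure Ω) [IsFiniteMeasure μ], CF (r + 1) μ a →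
    (r : ℝ) * (∫ x, dg μ a x ∂μ) ≤ ((r : ℝ) - 1) * μ.real univ ^ 2 := by
  induction r with
  | zero =>
    intro μ _ h
    have : ∀ᵐ x ∂μ, False := by
      filter_upwards [cf_succ ha h] with x hx
      unfold CF at hx
      rw [Measure.pi_of_empty _ Fin.elim0, ae_dirac_eq] at hx
      obtain ⟨i, _⟩ := hx
      exact i.elim0
    have : μ = 0 := by simpa using this
    simp [this]
  | succ r ih =>
    intro μ _ h
    have h1 : ∀ᵐ x ∂μ, (r : ℝ) * tr μ a x ≤ (r - 1) * dg μ a x ^ 2 := by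
      filter_upwards [cf_succ ha h] with x hx
      have := ih _ hx
      rwa [restr_dens μ ha, restr_mass μ ha] at this
    have h2 : (r : ℝ) * (∫ x, tr μ a x ∂μ) ≤ (r - 1) * ∫ x, dg μ a x ^ 2 ∂μ := by
      rw [← integral_const_mul, ← integral_const_mul]
      exact integral_mono_ae ((bddInt (tr_meas μ ha) _ (tr_abs μ ha)).const_mul _)
        ((dg_sq_int μ ha).const_mul _) h1
    have h3 := goodman μ ha
    have h4 : 0 ≤ ∫ x, ∫ y, a x y * cn μ a x y ∂μ ∂μ :=
      integral_nonneg fun x => integral_nonneg fun y => mul_nonneg (ha.nonneg _ _) (cn_nonneg μ ha _ _)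
    have h5 := cs μ ha
    have hp : 0 ≤ ∫ x, dg μ a x ∂μ :=
      integral_nonneg fun x => integral_nonneg fun y => ha.nonneg _ _
    have hm : 0 ≤ μ.real univ := measureReal_nonneg
    set p := ∫ x, dg μ a x ∂μ
    set D := ∫ x, dg μ a x ^ 2 ∂μ
    set T := ∫ x, tr μ a x ∂μ
    set m := μ.real univ
    rw [h3] at h4
    push_cast
    have hr : (0 : ℝ) ≤ r := Nat.cast_nonneg r
    have h6 : (r + 1) * D ≤ r * (m * p) := by nlinarith [mul_nonneg hr h4]
    have h7 : (r + 1) * p ^ 2 ≤ r * m ^ 2 * p := by nlinarith [mul_le_mul_of_nonneg_left h6 hm]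
    rcases hp.eq_or_lt with h | h
    · rw [← h]; simp; positivity
    · have : p * ((r + 1) * p) ≤ p * (r * m ^ 2) := by nlinarith
      have := le_of_mul_le_mul_left this h
      linarith


section Extremal

variable {Ω : Type*} [MeasurableSpace Ω] (μ : Measure Ω) [IsProbabilityMeasure μ] {a : Ω → Ω → ℝ}

lemma cn_le_one (ha : ZO a) (x y : Ω) : |cn μ a x y| ≤ 1 := by
  have := abs_int_le (μ := μ) (f := fun z => (1 - a x z) * (1 - a y z)) (C := 1) (fun z => by
    rcases ha.zo x z with h | h <;> rcases ha.zo y z with h' | h' <;> rw [h, h'] <;> norm_num)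
  simpa [cn] using this

lemma acn_abs (ha : ZO a) (x y : Ω) : |a x y * cn μ a x y| ≤ 1 := by
  rw [abs_mul]; exact mul_le_one₀ (ha.abs_le _ _) (abs_nonneg _) (cn_le_one μ ha _ _)

lemma extremal1 (ha : ZO a) (k : ℕ) (h : CF (k + 2) μ a)
    (hp : ∫ x, dg μ a x ∂μ = 1 - 1 / ((k : ℝ) + 1)) :
    (∀ᵐ x ∂μ, dg μ a x = 1 - 1 / ((k : ℝ) + 1)) ∧ (∀ᵐ x ∂μ, ∀ᵐ y ∂μ, a x y * cn μ a x y = 0) := by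
  have h1 : ∀ᵐ x ∂μ, (k : ℝ) * tr μ a x ≤ (k - 1) * dg μ a x ^ 2 := by
    filter_upwards [cf_succ ha h] with x hx
    have := turan ha k _ hx
    rwa [restr_dens μ ha, restr_mass μ ha] at this
  have h2 : (k : ℝ) * (∫ x, tr μ a x ∂μ) ≤ (k - 1) * ∫ x, dg μ a x ^ 2 ∂μ := by
    rw [← integral_const_mul, ← integral_const_mul]
    exact integral_mono_ae ((bddInt (tr_meas μ ha) _ (tr_abs μ ha)).const_mul _)
      ((dg_sq_int μ ha).const_mul _) h1
  have h3 := goodman μ ha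
  have h4 : 0 ≤ ∫ x, ∫ y, a x y * cn μ a x y ∂μ ∂μ :=
    integral_nonneg fun x => integral_nonneg fun y => mul_nonneg (ha.nonneg _ _) (cn_nonneg μ ha _ _)
  have hTp : ∫ x, tr μ a x ∂μ ≤ ∫ x, dg μ a x ∂μ := by
    refine integral_mono (bddInt (tr_meas μ ha) _ (tr_abs μ ha))
      (bddInt (dg_meas μ ha) _ (dg_abs μ ha)) fun x => ?_
    refine integral_mono (bddInt ((ha.meas2 x).mul ((cd_meas μ ha).comp
      (measurable_const.prodMk measurable_id))) _ (acd_abs μ ha x))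
      (bddInt (ha.meas2 x) 1 (ha.abs_le x)) fun y => ?_
    have := le_of_abs_le (cd_abs μ ha x y)
    simp at this
    exact mul_le_of_le_one_right (ha.nonneg _ _) this
  have h5 := var_id μ ha (1 - 1 / ((k : ℝ) + 1))
  have h6 : 0 ≤ ∫ x, (dg μ a x - (1 - 1 / ((k : ℝ) + 1))) ^ 2 ∂μ :=
    integral_nonneg fun x => sq_nonneg _
  rw [hp] at h3 h5 hTp
  rw [probReal_univ] at h3 h5
  have hk : (0 : ℝ) ≤ k := Nat.cast_nonneg k
  set p := 1 - 1 / ((k : ℝ) + 1) with hpd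
  have hpk : (k + 1) * p = k := by rw [hpd]; field_simp; ring
  have hp0 : 0 ≤ p := by nlinarith
  set D := ∫ x, dg μ a x ^ 2 ∂μ
  set T := ∫ x, tr μ a x ∂μ
  have h7 : (k + 1) * D ≤ k * p := by nlinarith [mul_nonneg hk h4]
  have h8 : D ≤ p ^ 2 := by
    have : ((k : ℝ) + 1) * D ≤ (k + 1) * p ^ 2 := by nlinarith
    exact le_of_mul_le_mul_left this (by positivity)
  have h9 : ∫ x, (dg μ a x - p) ^ 2 ∂μ = 0 := by nlinarith
  have hD : D = p ^ 2 := by nlinarith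
  have hS : ∫ x, ∫ y, a x y * cn μ a x y ∂μ ∂μ = 0 := by
    rcases hk.eq_or_lt with hk0 | hk0
    · have : p = 0 := by rw [← hk0] at hpk; linarith
      rw [this] at h3 hTp hD
      nlinarith
    · have : k * (∫ x, ∫ y, a x y * cn μ a x y ∂μ ∂μ) ≤ 0 := by
        rw [h3, hD]; rw [hD] at h2
        nlinarith
      nlinarith
  constructor
  · rw [integral_eq_zero_iff_of_nonneg (fun x => sq_nonneg _)] at h9
    · filter_upwards [h9] with x hx
      have := pow_eq_zero_iff (two_ne_zero) |>.1 hx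
      linarith
    · refine bddInt (((dg_meas μ ha).sub_const p).pow_const 2) ((1 + |p|) ^ 2) fun x => ?_
      rw [abs_pow]
      refine pow_le_pow_left₀ (abs_nonneg _) ?_ 2
      have := dg_abs μ ha x
      simp at this
      exact (abs_sub _ _).trans (by linarith)
  · have hm : Measurable (fun q : Ω × Ω => a q.1 q.2 * cn μ a q.1 q.2) :=
      ha.meas.mul (cn_meas μ ha)
    have e := integral_integral (f := fun x y => a x y * cn μ a x y) (μ := μ) (ν := μ)
      (bddInt hm 1 fun q => acn_abs μ ha _ _)
    rw [hS] at e
    have e' := (integral_eq_zero_iff_of_nonneg (fun q : Ω × Ω => mul_nonneg (ha.nonneg _ _)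
      (cn_nonneg μ ha _ _)) (bddInt hm 1 fun q => acn_abs μ ha _ _)).1 e.symm
    exact Measure.ae_ae_of_ae_prod e'

open Classical in
lemma extremal2 (ha : ZO a) (k : ℕ) (h : CF (k + 2) μ a)
    (hp : ∫ x, dg μ a x ∂μ = 1 - 1 / ((k : ℝ) + 1)) :
    ∃ c : Ω → Fin (k + 1), Measurable c ∧ (∀ i, μ.real (c ⁻¹' {i}) = 1 / ((k : ℝ) + 1)) ∧
      ∀ᵐ x ∂μ, ∀ᵐ y ∂μ, a x y = if c x = c y then 0 else 1 := by
  obtain ⟨hd, hcn⟩ := extremal1 μ ha k h hp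
  -- the modified kernel
  set b : Ω → Ω → ℝ := fun x y => if cn μ a x y = 0 then a x y else 0 with hb
  have hsymm : ∀ x y, cn μ a x y = cn μ a y x := fun x y => by
    unfold cn; congr 1; ext z; ring
  have hbZ : ZO b := by
    refine ⟨fun x y => ?_, ?_, fun x y => ?_⟩
    · simp only [hb]; rw [hsymm x y, ha.symm x y]
    · exact Measurable.ite ((cn_meas μ ha) (measurableSet_singleton 0)) ha.meas measurable_const
    · simp only [hb]; split_ifs
      · exact ha.zo x y
      · exact Or.inl rfl
  have hab : ∀ᵐ x ∂μ, dg μ b x = dg μ a x := by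
    filter_upwards [hcn] with x hx
    refine integral_congr_ae ?_
    filter_upwards [hx] with y hy
    simp only [hb]; split_ifs with h0
    · rfl
    · exact ((mul_eq_zero.1 hy).resolve_right h0).symm
  have hbp : ∫ x, dg μ b x ∂μ = 1 - 1 / ((k : ℝ) + 1) := by rw [integral_congr_ae hab, hp]
  have hk : (0 : ℝ) ≤ k := Nat.cast_nonneg k
  have hnot : ¬ CF (k + 1) μ b := by
    intro hc
    have := turan hbZ k μ hc
    rw [hbp, probReal_univ] at this
    have h2 : ((k : ℝ) + 1) * (k * (1 - 1 / ((k : ℝ) + 1))) = k * k := by field_simp; ring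
    nlinarith
  -- generic clique
  have hgen : ∀ᵐ x ∂(Measure.pi fun _ : Fin (k+1) => μ), ∀ i, dg μ a (x i) = 1 - 1 / ((k : ℝ) + 1) ∧
      ∀ᵐ y ∂μ, a (x i) y * cn μ a (x i) y = 0 := by
    rw [ae_all_iff]
    intro i
    exact (Measure.tendsto_eval_ae_ae (μ := fun _ : Fin (k+1) => μ) (i := i)).eventually
      (hd.and hcn)
  have hex : ∃ x : Fin (k+1) → Ω, (∀ i, dg μ a (x i) = 1 - 1 / ((k : ℝ) + 1) ∧
      ∀ᵐ y ∂μ, a (x i) y * cn μ a (x i) y = 0) ∧ ∀ i j, i < j → b (x i) (x j) ≠ 0 := by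
    by_contra hcon
    push Not at hcon
    apply hnot
    filter_upwards [hgen] with x hx
    exact hcon x hx
  obtain ⟨x, hx, hcl⟩ := hex
  have hcl0 : ∀ i j, i ≠ j → cn μ a (x i) (x j) = 0 := by
    have : ∀ i j, i < j → cn μ a (x i) (x j) = 0 := fun i j hij => by
      by_contra h0
      exact hcl i j hij (by simp only [hb]; rw [if_neg h0])
    intro i j hij
    rcases lt_or_gt_of_ne hij with h1 | h1
    · exact this i j h1
    · rw [hsymm]; exact this j i h1
  -- a.e. consequence of vanishing common non-neighbourhood
  have hcnae : ∀ u v, cn μ a u v = 0 → ∀ᵐ z ∂μ, a u z = 1 ∨ a v z = 1 := by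
    intro u v h0
    have hm : Measurable (fun z => (1 - a u z) * (1 - a v z)) :=
      (measurable_const.sub (ha.meas2 u)).mul (measurable_const.sub (ha.meas2 v))
    have := (integral_eq_zero_iff_of_nonneg (μ := μ) (f := fun z => (1 - a u z) * (1 - a v z))
      (fun z => mul_nonneg (by simpa using ha.le_one u z) (by simpa using ha.le_one v z))
      (bddInt hm 1 fun z => by
        rcases ha.zo u z with h | h <;> rcases ha.zo v z with h' | h' <;> rw [h, h'] <;>
          norm_num)).1 h0
    filter_upwards [this] with z hz
    rcases mul_eq_zero.1 hz with h | h
    · left; linarith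
    · right; linarith
  have hdisj : ∀ᵐ z ∂μ, ∀ i j, i ≠ j → a (x i) z = 1 ∨ a (x j) z = 1 := by
    simp only [ae_all_iff]
    intro i j hij
    exact hcnae _ _ (hcl0 i j hij)
  -- total mass
  have i1 : ∀ u, Integrable (fun z => 1 - a u z) μ := fun u =>
    isub (integrable_const 1) (bddInt (ha.meas2 u) 1 (ha.abs_le u))
  have hi1 : ∀ u, ∫ z, (1 - a u z) ∂μ = 1 - dg μ a u := fun u => by
    rw [integral_sub (integrable_const 1) (bddInt (ha.meas2 u) 1 (ha.abs_le u))]; simp [dg]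
  have hsum : ∀ᵐ z ∂μ, ∑ i, (1 - a (x i) z) = 1 := by
    have hle : ∀ᵐ z ∂μ, ∑ i, (1 - a (x i) z) ≤ 1 := by
      filter_upwards [hdisj] with z hz
      by_cases he : ∃ i, a (x i) z = 0
      · obtain ⟨i, hi⟩ := he
        rw [Finset.sum_eq_single i]
        · rw [hi]; norm_num
        · intro j _ hji
          rcases hz i j hji.symm with h1 | h1
          · rw [hi] at h1; norm_num at h1
          · rw [h1]; norm_num
        · simp
      · push Not at he
        rw [Finset.sum_eq_zero]
        · norm_num
        · intro i _
          rw [(ha.zo _ _).resolve_left (he i)]; norm_num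
    have hint : ∫ z, (1 - ∑ i, (1 - a (x i) z)) ∂μ = 0 := by
      rw [integral_sub (integrable_const 1) (integrable_finsetSum _ fun i _ => i1 _),
        integral_finsetSum _ fun i _ => i1 _]
      simp_rw [hi1, (hx _).1]
      simp
      field_simp
      simp
    have := (integral_eq_zero_iff_of_nonneg_ae (by
      filter_upwards [hle] with z hz
      simpa using hz) (isub (integrable_const 1) (integrable_finsetSum _ fun i _ => i1 _))).1 hint
    filter_upwards [this] with z hz
    simp only [Pi.zero_apply] at hz
    linarith
  have hex1 : ∀ᵐ z ∂μ, ∃ i, a (x i) z = 0 ∧ ∀ j, j ≠ i → a (x j) z = 1 := by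
    filter_upwards [hsum, hdisj] with z hz hdz
    by_cases he : ∃ i, a (x i) z = 0
    · obtain ⟨i, hi⟩ := he
      refine ⟨i, hi, fun j hj => ?_⟩
      rcases hdz i j hj.symm with h1 | h1
      · rw [hi] at h1; norm_num at h1
      · exact h1
    · push Not at he
      rw [Finset.sum_eq_zero] at hz
      · norm_num at hz
      · intro i _
        rw [(ha.zo _ _).resolve_left (he i)]; norm_num
  -- the colouring
  set c : Ω → Fin (k + 1) := fun z => ∑ i, if a (x i) z = 0 then i else 0 with hc
  have hcm : Measurable c := by
    have : ∀ i, Measurable (fun z => if a (x i) z = 0 then i else (0 : Fin (k+1))) := fun i =>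
      Measurable.ite ((ha.meas2 (x i)) (measurableSet_singleton 0)) measurable_const
        measurable_const
    exact Finset.measurable_fun_sum _ fun i _ => this i
  have hcp : ∀ᵐ z ∂μ, ∀ i, a (x i) z = if c z = i then 0 else 1 := by
    filter_upwards [hex1] with z hz i
    obtain ⟨j, hj, hj'⟩ := hz
    have : c z = j := by
      simp only [hc]
      rw [Finset.sum_eq_single j]
      · rw [if_pos hj]
      · intro l _ hl
        rw [hj' l hl]; norm_num
      · simp
    rw [this]
    split_ifs with h1
    · rw [← h1, hj]
    · exact hj' i (Ne.symm h1)
  have hcI : ∀ i, ∫ z, (if c z = i then (1:ℝ) else 0) ∂μ = 1 / ((k : ℝ) + 1) := fun i => by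
    have : ∫ z, (if c z = i then (1:ℝ) else 0) ∂μ = ∫ z, (1 - a (x i) z) ∂μ := by
      refine integral_congr_ae ?_
      filter_upwards [hcp] with z hz
      rw [hz i]; split_ifs <;> norm_num
    rw [this, hi1, (hx i).1]; ring
  have hcset : ∀ i, MeasurableSet {z | c z = i} := fun i => hcm (measurableSet_singleton i)
  refine ⟨c, hcm, fun i => ?_, ?_⟩
  · rw [← hcI i]
    have : (fun z => if c z = i then (1:ℝ) else 0) = (c ⁻¹' {i}).indicator 1 := by
      ext z; simp [Set.indicator]
    rw [this, integral_indicator_one (hcm (measurableSet_singleton i))]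
  · have hall : ∀ᵐ y ∂μ, ∀ i, a (x i) y * cn μ a (x i) y = 0 := by
      rw [ae_all_iff]; exact fun i => (hx i).2
    filter_upwards [hd, hcp, hall] with y hdy hcy hy
    have s1 : ∀ᵐ z ∂μ, ∀ j, j ≠ c y → a (x j) z = 1 ∨ a y z = 1 := by
      simp only [ae_all_iff]
      intro j hj
      refine hcnae _ _ ?_
      have h1 : a (x j) y = 1 := by rw [hcy j, if_neg hj.symm]
      have := hy j
      rwa [h1, one_mul] at this
    have s2 : ∀ᵐ z ∂μ, 1 - a y z ≤ if c z = c y then (1:ℝ) else 0 := by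
      filter_upwards [s1, hcp] with z hz hcz
      split_ifs with h1
      · linarith [ha.nonneg y z]
      · rcases hz (c z) h1 with h2 | h2
        · rw [hcz, if_pos rfl] at h2; norm_num at h2
        · rw [h2]; norm_num
    have i2 : Integrable (fun z => if c z = c y then (1:ℝ) else 0) μ :=
      bddInt (Measurable.ite (hcset _) measurable_const measurable_const) 1 fun z => by
        split_ifs <;> norm_num
    have s3 : ∫ z, ((if c z = c y then (1:ℝ) else 0) - (1 - a y z)) ∂μ = 0 := by
      rw [integral_sub i2 (i1 y), hcI, hi1, hdy]; ring
    have := (integral_eq_zero_iff_of_nonneg_ae (by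
      filter_upwards [s2] with z hz
      simpa using hz) (isub i2 (i1 y))).1 s3
    filter_upwards [this] with z hz
    simp only [Pi.zero_apply] at hz
    by_cases h1 : c z = c y
    · rw [if_pos h1] at hz; rw [if_pos h1.symm]; linarith
    · rw [if_neg h1] at hz; rw [if_neg (Ne.symm h1)]; linarith

end Extremal

section Cut

/-- Lebesgue measure on `[0,1]`. -/
def mu : Measure ℝ := volume.restrict (Set.Icc (0:ℝ) 1)

instance : IsProbabilityMeasure mu := ⟨by simp [mu]⟩

lemma mu_prod : mu.prod mu = volume.restrict (Icc (0:ℝ) 1 ×ˢ Icc (0:ℝ) 1) := by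
  unfold mu; rw [Measure.prod_restrict]; rfl

lemma cutNorm_nonneg (U : ℝ → ℝ → ℝ) : 0 ≤ cutNorm U := by
  apply Real.sSup_nonneg
  rintro _ ⟨S, T, _, _, _, _, rfl⟩
  exact abs_nonneg _

lemma le_cutNorm {U : ℝ → ℝ → ℝ} (hU : ∀ x y, |U x y| ≤ 1) {S T : Set ℝ}
    (hS : MeasurableSet S) (hT : MeasurableSet T) (hS1 : S ⊆ Icc 0 1) (hT1 : T ⊆ Icc 0 1) :
    |∫ p in S ×ˢ T, U p.1 p.2| ≤ cutNorm U := by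
  apply le_csSup
  · refine ⟨1, ?_⟩
    rintro _ ⟨S, T, _, _, hS, hT, rfl⟩
    have hle : (volume : Measure (ℝ × ℝ)) (S ×ˢ T) ≤ 1 := by
      calc _ ≤ (volume : Measure (ℝ × ℝ)) (Icc (0:ℝ) 1 ×ˢ Icc (0:ℝ) 1) :=
            measure_mono (Set.prod_mono hS hT)
        _ = 1 := by rw [Measure.volume_eq_prod, Measure.prod_prod]; simp
    have := norm_setIntegral_le_of_norm_le_const (μ := (volume : Measure (ℝ × ℝ)))
      (s := S ×ˢ T) (f := fun p => U p.1 p.2) (C := 1) (hle.trans_lt ENNReal.one_lt_top)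
      (fun p _ => hU p.1 p.2)
    refine this.trans ?_
    rw [one_mul]
    exact ENNReal.toReal_mono ENNReal.one_ne_top hle
  · exact ⟨S, T, hS, hT, hS1, hT1, rfl⟩

lemma IsMPSelf.mp {σ : ℝ → ℝ} (h : IsMPSelf σ) : MeasurePreserving σ mu mu := h.1

lemma IsMPSelf.prod {σ : ℝ → ℝ} (h : IsMPSelf σ) :
    MeasurePreserving (Prod.map σ σ) (mu.prod mu) (mu.prod mu) := h.mp.prod h.mp

lemma U_int {U : ℕ → ℝ → ℝ → ℝ}
    (hU : ∀ n x y, |U n x y| ≤ 1) (hUm : ∀ n, Measurable (Function.uncurry (U n)))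
    (n : ℕ) : Integrable (fun p : ℝ × ℝ => U n p.1 p.2) (mu.prod mu) :=
  bddInt (hUm n) 1 fun p => hU n p.1 p.2

lemma weak_set {σ₁ : ℕ → ℝ → ℝ} (hσ : ∀ n, IsMPSelf (σ₁ n)) {U : ℕ → ℝ → ℝ → ℝ}
    (hU : ∀ n x y, |U n x y| ≤ 1) (hUm : ∀ n, Measurable (Function.uncurry (U n)))
    (hlim : Tendsto (fun n => cutNorm (U n)) atTop (nhds 0))
    {B : Set (ℝ × ℝ)} (hB : MeasurableSet B) :
    Tendsto (fun n => ∫ p in Prod.map (σ₁ n) (σ₁ n) ⁻¹' B, U n p.1 p.2 ∂(mu.prod mu))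
      atTop (nhds 0) := by
  have hrect : ∀ S T : Set ℝ, MeasurableSet S → MeasurableSet T →
      Tendsto (fun n => ∫ p in Prod.map (σ₁ n) (σ₁ n) ⁻¹' (S ×ˢ T), U n p.1 p.2 ∂(mu.prod mu))
      atTop (nhds 0) := by
    intro S T hS hT
    refine squeeze_zero_norm (fun n => ?_) hlim
    have hm := (hσ n).mp.measurable
    have e : (mu.prod mu).restrict (Prod.map (σ₁ n) (σ₁ n) ⁻¹' (S ×ˢ T)) =
        volume.restrict (((σ₁ n ⁻¹' S) ∩ Icc 0 1) ×ˢ ((σ₁ n ⁻¹' T) ∩ Icc 0 1)) := by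
      rw [mu_prod, Measure.restrict_restrict ((hm.prodMap hm) (hS.prod hT))]
      congr 1
      ext p; simp only [mem_inter_iff, mem_preimage, mem_prod, Prod.map_fst, Prod.map_snd]; tauto
    rw [e]
    exact le_cutNorm (hU n) ((hm hS).inter measurableSet_Icc) ((hm hT).inter measurableSet_Icc)
      inter_subset_right inter_subset_right
  have huniv := hrect univ univ MeasurableSet.univ MeasurableSet.univ
  rw [univ_prod_univ] at huniv
  induction B, hB using MeasurableSpace.induction_on_inter generateFrom_prod.symm
    isPiSystem_prod with
  | empty => simp
  | basic t ht =>
    obtain ⟨S, hS, T, hT, rfl⟩ := ht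
    exact hrect S T hS hT
  | compl t ht ih =>
    have := huniv.sub ih
    rw [sub_zero] at this
    refine this.congr fun n => ?_
    have hm := (hσ n).mp.measurable
    rw [preimage_univ, setIntegral_univ, preimage_compl,
      setIntegral_compl ((hm.prodMap hm) ht) (U_int hU hUm n)]
  | iUnion f hd hm ih =>
    have key : ∀ n, ∫ p in Prod.map (σ₁ n) (σ₁ n) ⁻¹' (⋃ i, f i), U n p.1 p.2 ∂(mu.prod mu) =
        ∑' i, ∫ p in Prod.map (σ₁ n) (σ₁ n) ⁻¹' (f i), U n p.1 p.2 ∂(mu.prod mu) := by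
      intro n
      have hms := (hσ n).mp.measurable
      rw [preimage_iUnion, integral_iUnion (fun i => (hms.prodMap hms) (hm i))]
      · intro i j hij
        exact (hd hij).preimage _
      · exact (U_int hU hUm n).integrableOn
    simp_rw [key]
    have := tendsto_tsum_of_dominated_convergence (𝓕 := atTop)
      (f := fun n i => ∫ p in Prod.map (σ₁ n) (σ₁ n) ⁻¹' (f i), U n p.1 p.2 ∂(mu.prod mu))
      (g := fun _ => (0:ℝ)) (bound := fun i => (mu.prod mu).real (f i)) ?_ ih ?_
    · simpa using this
    · have h1 := measure_iUnion (μ := mu.prod mu) hd hm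
      refine ENNReal.summable_toReal ?_
      rw [← h1]; exact measure_ne_top _ _
    · refine Eventually.of_forall fun n i => ?_
      have := norm_setIntegral_le_of_norm_le_const (μ := mu.prod mu)
        (s := Prod.map (σ₁ n) (σ₁ n) ⁻¹' (f i)) (f := fun p => U n p.1 p.2) (C := 1)
        (measure_lt_top _ _) (fun p _ => hU n p.1 p.2)
      rw [one_mul, measureReal_def, (hσ n).prod.measure_preimage (hm i).nullMeasurableSet] at this
      exact this

lemma floor_approx (N : ℕ) (hN : 0 < N) (w : ℝ) (h0 : 0 ≤ w) (h1 : w ≤ 1) :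
    |w - (1 / (N:ℝ)) * ∑ k ∈ Finset.range N, (if ((k:ℝ) + 1) / N ≤ w then (1:ℝ) else 0)| ≤ 1 / N := by
  have hN' : (0:ℝ) < N := Nat.cast_pos.2 hN
  have e : ∑ k ∈ Finset.range N, (if ((k:ℝ) + 1) / N ≤ w then (1:ℝ) else 0) = (⌊N * w⌋₊ : ℝ) := by
    rw [← Finset.sum_filter]
    simp only [Finset.sum_const, nsmul_eq_mul, mul_one]
    congr 1
    have : Finset.filter (fun k : ℕ => ((k:ℝ) + 1) / N ≤ w) (Finset.range N) =
        Finset.range ⌊N * w⌋₊ := by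
      ext k
      simp only [Finset.mem_filter, Finset.mem_range]
      have h2 : ((k:ℝ) + 1) / N ≤ w ↔ k < ⌊N * w⌋₊ := by
        rw [div_le_iff₀ hN', ← Nat.succ_le_iff, Nat.le_floor_iff (by positivity)]
        push_cast; rw [mul_comm]
      rw [h2]
      constructor
      · exact fun h => h.2
      · intro h
        refine ⟨h.trans_le ?_, h⟩
        exact Nat.floor_le_of_le (by nlinarith)
    rw [this, Finset.card_range]
  rw [e]
  have h3 := Nat.floor_le (show 0 ≤ N * w by positivity)
  have h4 := Nat.lt_floor_add_one (N * w)
  have : w - 1 / (N:ℝ) * (⌊N * w⌋₊ : ℝ) = (1 / N) * (N * w - ⌊N * w⌋₊) := by field_simp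
  rw [this, abs_mul, abs_of_pos (by positivity)]
  refine mul_le_of_le_one_right (by positivity) ?_
  rw [abs_le]; constructor <;> linarith

lemma weak_fun {σ₁ : ℕ → ℝ → ℝ} (hσ : ∀ n, IsMPSelf (σ₁ n)) {U : ℕ → ℝ → ℝ → ℝ}
    (hU : ∀ n x y, |U n x y| ≤ 1) (hUm : ∀ n, Measurable (Function.uncurry (U n)))
    (hlim : Tendsto (fun n => cutNorm (U n)) atTop (nhds 0))
    {W : ℝ → ℝ → ℝ} (hW : IsGraphon W) :
    Tendsto (fun n => ∫ p, W (σ₁ n p.1) (σ₁ n p.2) * U n p.1 p.2 ∂(mu.prod mu))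
      atTop (nhds 0) := by
  obtain ⟨_, hWm, hW01⟩ := hW
  rw [Metric.tendsto_atTop]
  intro ε hε
  obtain ⟨N, hN⟩ := exists_nat_gt (2 / ε)
  have hN0 : (0:ℝ) < N := lt_trans (by positivity) hN
  have hNn : 0 < N := by exact_mod_cast hN0
  have hNε : 1 / (N:ℝ) < ε / 2 := by
    rw [div_lt_iff₀ hε] at hN
    rw [div_lt_iff₀ hN0]; linarith
  set B : ℕ → Set (ℝ × ℝ) := fun k => {p | ((k:ℝ) + 1) / N ≤ W p.1 p.2} with hBdef
  have hB : ∀ k, MeasurableSet (B k) := fun k => measurableSet_le measurable_const hWm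
  have hs : Tendsto (fun n => (1 / (N:ℝ)) * ∑ k ∈ Finset.range N,
      ∫ p in Prod.map (σ₁ n) (σ₁ n) ⁻¹' (B k), U n p.1 p.2 ∂(mu.prod mu)) atTop (nhds 0) := by
    have := (tendsto_finsetSum (Finset.range N)
      fun k _ => weak_set hσ hU hUm hlim (hB k)).const_mul (1 / (N:ℝ))
    simpa using this
  rw [Metric.tendsto_atTop] at hs
  obtain ⟨n0, hn0⟩ := hs (ε / 2) (by positivity)
  refine ⟨n0, fun n hn => ?_⟩
  have h1 := hn0 n hn
  rw [Real.dist_eq, sub_zero] at h1 ⊢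
  have hms := (hσ n).mp.measurable
  have hWs : Measurable (fun p : ℝ × ℝ => W (σ₁ n p.1) (σ₁ n p.2)) :=
    hWm.comp (hms.prodMap hms)
  have hk : ∀ k, MeasurableSet (Prod.map (σ₁ n) (σ₁ n) ⁻¹' (B k)) := fun k =>
    (hms.prodMap hms) (hB k)
  have iI : ∀ k : ℕ, Integrable (fun p : ℝ × ℝ => (if ((k:ℝ) + 1) / N ≤ W (σ₁ n p.1) (σ₁ n p.2)
      then (1:ℝ) else 0) * U n p.1 p.2) (mu.prod mu) := fun k =>
    bddInt ((Measurable.ite (hk k) measurable_const measurable_const).mul (hUm n)) 1 fun p => by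
      rw [abs_mul]
      refine mul_le_one₀ ?_ (abs_nonneg _) (hU n _ _)
      split_ifs <;> norm_num
  have e1 : (1 / (N:ℝ)) * ∑ k ∈ Finset.range N,
      ∫ p in Prod.map (σ₁ n) (σ₁ n) ⁻¹' (B k), U n p.1 p.2 ∂(mu.prod mu) =
      ∫ p, (1 / (N:ℝ)) * ∑ k ∈ Finset.range N,
        (if ((k:ℝ) + 1) / N ≤ W (σ₁ n p.1) (σ₁ n p.2) then (1:ℝ) else 0) * U n p.1 p.2
          ∂(mu.prod mu) := by
    rw [integral_const_mul, integral_finsetSum _ fun k _ => iI k]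
    congr 1
    refine Finset.sum_congr rfl fun k _ => ?_
    rw [← integral_indicator (hk k)]
    congr 1; ext p
    simp only [Set.indicator, hBdef, mem_preimage, Prod.map_apply', mem_setOf_eq]
    split_ifs <;> simp
  have iW : Integrable (fun p : ℝ × ℝ => W (σ₁ n p.1) (σ₁ n p.2) * U n p.1 p.2) (mu.prod mu) :=
    bddInt (hWs.mul (hUm n)) 1 fun p => by
      rw [abs_mul]
      refine mul_le_one₀ ?_ (abs_nonneg _) (hU n _ _)
      rw [abs_of_nonneg (hW01 _ _).1]; exact (hW01 _ _).2
  rw [e1] at h1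
  have h2 : |(∫ p, W (σ₁ n p.1) (σ₁ n p.2) * U n p.1 p.2 ∂(mu.prod mu)) -
      ∫ p, (1 / (N:ℝ)) * ∑ k ∈ Finset.range N,
        (if ((k:ℝ) + 1) / N ≤ W (σ₁ n p.1) (σ₁ n p.2) then (1:ℝ) else 0) * U n p.1 p.2
          ∂(mu.prod mu)| ≤ 1 / N := by
    rw [← integral_sub iW ((integrable_finsetSum _ fun k _ => iI k).const_mul _)]
    have := abs_int_le (μ := mu.prod mu) (C := 1 / (N:ℝ))
      (f := fun p => W (σ₁ n p.1) (σ₁ n p.2) * U n p.1 p.2 - (1 / (N:ℝ)) *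
        ∑ k ∈ Finset.range N,
        (if ((k:ℝ) + 1) / N ≤ W (σ₁ n p.1) (σ₁ n p.2) then (1:ℝ) else 0) * U n p.1 p.2) ?_
    · simpa using this
    · intro p
      rw [← Finset.sum_mul, ← mul_assoc, ← sub_mul, abs_mul]
      have := floor_approx N hNn (W (σ₁ n p.1) (σ₁ n p.2)) (hW01 _ _).1 (hW01 _ _).2
      calc _ ≤ 1 / (N:ℝ) * 1 := mul_le_mul this (hU n _ _) (abs_nonneg _) (by positivity)
        _ = _ := mul_one _
  have := abs_sub_abs_le_abs_sub (∫ p, W (σ₁ n p.1) (σ₁ n p.2) * U n p.1 p.2 ∂(mu.prod mu))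
    (∫ p, (1 / (N:ℝ)) * ∑ k ∈ Finset.range N,
        (if ((k:ℝ) + 1) / N ≤ W (σ₁ n p.1) (σ₁ n p.2) then (1:ℝ) else 0) * U n p.1 p.2
          ∂(mu.prod mu))
  linarith

end Cut

lemma q_int {W : ℝ → ℝ → ℝ} (hW : IsGraphon W) :
    Integrable (fun p : ℝ × ℝ => W p.1 p.2 * (1 - W p.1 p.2)) (mu.prod mu) :=
  bddInt (hW.2.1.mul (measurable_const.sub hW.2.1)) 1 fun p => by
    have := hW.2.2 p.1 p.2
    rw [abs_of_nonneg (mul_nonneg this.1 (by linarith [this.2]))]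
    nlinarith [this.1, this.2]

lemma comp_graphon {W : ℝ → ℝ → ℝ} (hW : IsGraphon W) {σ : ℝ → ℝ} (hσ : Measurable σ) :
    IsGraphon (fun x y => W (σ x) (σ y)) :=
  ⟨fun x y => hW.1 _ _, hW.2.1.comp (hσ.prodMap hσ), fun x y => hW.2.2 _ _⟩

lemma q_comp {W : ℝ → ℝ → ℝ} (hW : IsGraphon W) {σ : ℝ → ℝ} (hσ : IsMPSelf σ) :
    ∫ p, W (σ p.1) (σ p.2) * (1 - W (σ p.1) (σ p.2)) ∂(mu.prod mu) =
      ∫ p, W p.1 p.2 * (1 - W p.1 p.2) ∂(mu.prod mu) := by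
  have h := hσ.prod.map_eq
  conv_rhs => rw [← h]
  rw [integral_map hσ.prod.measurable.aemeasurable]
  · rfl
  · exact (hW.2.1.mul (measurable_const.sub hW.2.1)).aestronglyMeasurable

lemma q_le_of_delta {W W' : ℝ → ℝ → ℝ} (hW : IsGraphon W) (hW' : IsGraphon W')
    (h : deltaCut W W' = 0) :
    ∫ p, W' p.1 p.2 * (1 - W' p.1 p.2) ∂(mu.prod mu) ≤
      ∫ p, W p.1 p.2 * (1 - W p.1 p.2) ∂(mu.prod mu) := by
  have hid : IsMPSelf id := ⟨MeasurePreserving.id _, mapsTo_id _⟩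
  have hex : ∀ n : ℕ, ∃ σ₁ σ₂ : ℝ → ℝ, IsMPSelf σ₁ ∧ IsMPSelf σ₂ ∧
      cutNorm (fun x y => W (σ₁ x) (σ₁ y) - W' (σ₂ x) (σ₂ y)) < 1 / ((n:ℝ) + 1) := by
    intro n
    have h0 : deltaCut W W' < 1 / ((n:ℝ) + 1) := by rw [h]; positivity
    have hne : { r : ℝ | ∃ σ₁ σ₂ : ℝ → ℝ, IsMPSelf σ₁ ∧ IsMPSelf σ₂ ∧
        r = cutNorm (fun x y => W (σ₁ x) (σ₁ y) - W' (σ₂ x) (σ₂ y)) }.Nonempty :=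
      ⟨_, id, id, hid, hid, rfl⟩
    obtain ⟨_, ⟨σ₁, σ₂, h1, h2, rfl⟩, h3⟩ := exists_lt_of_csInf_lt hne h0
    exact ⟨σ₁, σ₂, h1, h2, h3⟩
  choose σ₁ σ₂ h1 h2 h3 using hex
  set U : ℕ → ℝ → ℝ → ℝ := fun n x y => W (σ₁ n x) (σ₁ n y) - W' (σ₂ n x) (σ₂ n y) with hUdef
  have g1 := fun n => comp_graphon hW (h1 n).mp.measurable
  have g2 := fun n => comp_graphon hW' (h2 n).mp.measurable
  have hUm : ∀ n, Measurable (Function.uncurry (U n)) := fun n => (g1 n).2.1.sub (g2 n).2.1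
  have hU : ∀ n x y, |U n x y| ≤ 1 := fun n x y => by
    have a1 := (g1 n).2.2 x y
    have a2 := (g2 n).2.2 x y
    rw [abs_le]; simp only [hUdef]
    constructor <;> linarith [a1.1, a1.2, a2.1, a2.2]
  have hlim : Tendsto (fun n => cutNorm (U n)) atTop (nhds 0) :=
    squeeze_zero (fun n => cutNorm_nonneg _) (fun n => (h3 n).le)
      tendsto_one_div_add_atTop_nhds_zero_nat
  have t1 := weak_fun h1 hU hUm hlim hW
  have t2 := weak_set h1 hU hUm hlim MeasurableSet.univ
  simp only [preimage_univ, setIntegral_univ] at t2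
  have t3 : Tendsto (fun n => (∫ p, W p.1 p.2 * (1 - W p.1 p.2) ∂(mu.prod mu)) -
      (∫ p, U n p.1 p.2 ∂(mu.prod mu)) +
      2 * ∫ p, W (σ₁ n p.1) (σ₁ n p.2) * U n p.1 p.2 ∂(mu.prod mu)) atTop
      (nhds (∫ p, W p.1 p.2 * (1 - W p.1 p.2) ∂(mu.prod mu))) := by
    have := (tendsto_const_nhds (x := ∫ p, W p.1 p.2 * (1 - W p.1 p.2) ∂(mu.prod mu))).sub t2
      |>.add (t1.const_mul 2)
    simpa using this
  refine ge_of_tendsto t3 (Eventually.of_forall fun n => ?_)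
  rw [← q_comp hW' (h2 n), ← q_comp hW (h1 n)]
  have iU : Integrable (fun p : ℝ × ℝ => U n p.1 p.2) (mu.prod mu) :=
    bddInt (hUm n) 1 fun p => hU n _ _
  have iW : Integrable (fun p : ℝ × ℝ => W (σ₁ n p.1) (σ₁ n p.2) * U n p.1 p.2) (mu.prod mu) :=
    bddInt ((g1 n).2.1.mul (hUm n)) 1 fun p => by
      rw [abs_mul]
      refine mul_le_one₀ ?_ (abs_nonneg _) (hU n _ _)
      have := (g1 n).2.2 p.1 p.2
      rw [abs_of_nonneg this.1]; exact this.2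
  rw [← integral_sub (q_int (g1 n)) iU, ← integral_const_mul,
    ← integral_add (isub (q_int (g1 n)) iU) (iW.const_mul 2)]
  refine integral_mono (q_int (g2 n)) ((isub (q_int (g1 n)) iU).add (iW.const_mul 2)) fun p => ?_
  simp only [hUdef, Pi.add_apply]
  nlinarith [sq_nonneg (W (σ₁ n p.1) (σ₁ n p.2) - W' (σ₂ n p.1) (σ₂ n p.2))]

section Rearrange

lemma exists_map_mu (ν : Measure ℝ) [IsProbabilityMeasure ν] :
    ∃ F : ℝ → ℝ, Measurable F ∧ mu.map F = ν := by
  obtain ⟨f, hf, hfν⟩ := Measure.exists_measurable_map_eq ν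
  have hp : Measurable (Set.projIcc (0:ℝ) 1 zero_le_one) := continuous_projIcc.measurable
  refine ⟨f ∘ Set.projIcc 0 1 zero_le_one, hf.comp hp, ?_⟩
  have h1 : mu = (volume : Measure (Icc (0:ℝ) 1)).map Subtype.val := by
    unfold mu
    exact (map_comap_subtype_coe measurableSet_Icc _).symm
  rw [h1, Measure.map_map (hf.comp hp) measurable_subtype_coe, ← hfν]
  congr 1
  ext u
  simp

/-- The intervals. -/
def II (r : ℕ) (i : Fin r) : Set ℝ := Set.Ioc (((i:ℕ):ℝ)/r) ((((i:ℕ):ℝ)+1)/r)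

lemma II_meas (r : ℕ) (i : Fin r) : MeasurableSet (II r i) := measurableSet_Ioc

lemma exists_map_II (r : ℕ) [NeZero r] (i : Fin r) (ν : Measure ℝ) [IsFiniteMeasure ν]
    (hν : ν.real univ = 1 / r) :
    ∃ g : ℝ → ℝ, Measurable g ∧ (volume.restrict (II r i)).map g = ν := by
  have hr : (0:ℝ) < r := Nat.cast_pos.2 (Nat.pos_of_ne_zero (NeZero.ne r))
  have hνu : ν univ = ENNReal.ofReal (1 / r) := by
    rw [← hν, ofReal_measureReal]
  have : IsProbabilityMeasure (ENNReal.ofReal r • ν) := ⟨by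
    rw [Measure.smul_apply, hνu, smul_eq_mul, ← ENNReal.ofReal_mul hr.le]
    rw [mul_one_div_cancel hr.ne']; simp⟩
  obtain ⟨F, hF, hFν⟩ := exists_map_mu (ENNReal.ofReal r • ν)
  have hφ : Measurable (fun x : ℝ => r * x - (i:ℕ)) := by fun_prop
  refine ⟨fun x => F (r * x - (i:ℕ)), hF.comp hφ, ?_⟩
  have hpre : II r i = (fun x : ℝ => r * x - (i:ℕ)) ⁻¹' (Ioc 0 1) := by
    ext x
    simp only [II, mem_Ioc, mem_preimage]
    rw [div_lt_iff₀ hr, le_div_iff₀ hr]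
    constructor <;> rintro ⟨h1, h2⟩ <;> constructor <;> linarith
  have hmap : (volume : Measure ℝ).map (fun x : ℝ => r * x - (i:ℕ)) =
      ENNReal.ofReal (1 / r) • volume := by
    have : (fun x : ℝ => r * x - (i:ℕ)) = (fun x => x - ((i:ℕ):ℝ)) ∘ (fun x => r * x) := rfl
    rw [this, ← Measure.map_map (by fun_prop) (by fun_prop), Real.map_volume_mul_left hr.ne',
      Measure.map_smul, (measurePreserving_sub_right volume ((i:ℕ):ℝ)).map_eq,
      abs_of_pos (inv_pos.2 hr), one_div]
  have h2 : (volume.restrict (II r i)).map (fun x : ℝ => r * x - (i:ℕ)) =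
      ENNReal.ofReal (1 / r) • mu := by
    rw [hpre, ← Measure.restrict_map hφ measurableSet_Ioc, hmap, Measure.restrict_smul]
    congr 1
    exact Measure.restrict_congr_set Ioc_ae_eq_Icc
  have h3 : (volume.restrict (II r i)).map (fun x => F (r * x - (i:ℕ))) =
      ((volume.restrict (II r i)).map (fun x : ℝ => r * x - (i:ℕ))).map F := by
    rw [Measure.map_map hF hφ]; rfl
  rw [h3, h2, Measure.map_smul, hFν, smul_smul, ← ENNReal.ofReal_mul (by positivity),
    one_div_mul_cancel hr.ne']
  simp

lemma exists_rearr (r : ℕ) [NeZero r] (c : ℝ → Fin r) (hc : Measurable c)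
    (hcm : ∀ i, mu.real (c ⁻¹' {i}) = 1 / r) :
    ∃ (σ : ℝ → ℝ) (idx : ℝ → Fin r), IsMPSelf σ ∧ Measurable σ ∧ Measurable idx ∧
      (∀ i x, x ∈ II r i → idx x = i) ∧ (∀ x ∈ Ioc (0:ℝ) 1, x ∈ II r (idx x)) ∧
      ∀ᵐ x ∂mu, c (σ x) = idx x := by
  have hr : (0:ℝ) < r := Nat.cast_pos.2 (Nat.pos_of_ne_zero (NeZero.ne r))
  have hg : ∀ i, ∃ g : ℝ → ℝ, Measurable g ∧
      (volume.restrict (II r i)).map g = mu.restrict (c ⁻¹' {i}) := fun i =>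
    exists_map_II r i _ (by simpa [measureReal_restrict_apply_univ] using hcm i)
  choose g hgm hg using hg
  set idx : ℝ → Fin r := fun x => Fin.ofNat r (⌈(r:ℝ) * x⌉₊ - 1) with hidx
  have hidxm : Measurable idx := by
    have : Measurable (fun x : ℝ => ⌈(r:ℝ) * x⌉₊) := Nat.measurable_ceil.comp (by fun_prop)
    exact (measurable_of_countable (fun n : ℕ => Fin.ofNat r (n - 1))).comp this
  have hI : ∀ i x, x ∈ II r i → idx x = i := by
    intro i x hx
    simp only [II, mem_Ioc] at hx
    rw [div_lt_iff₀ hr, le_div_iff₀ hr] at hx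
    have : ⌈(r:ℝ) * x⌉₊ = (i:ℕ) + 1 := by
      rw [Nat.ceil_eq_iff (by omega)]
      push_cast
      constructor <;> linarith
    simp only [hidx, this]
    simp
  have hI2 : ∀ x ∈ Ioc (0:ℝ) 1, x ∈ II r (idx x) := by
    intro x hx
    have h0 : 0 < (r:ℝ) * x := mul_pos hr hx.1
    have h1 : 0 < ⌈(r:ℝ) * x⌉₊ := Nat.ceil_pos.2 h0
    have h2 : ⌈(r:ℝ) * x⌉₊ ≤ r := Nat.ceil_le.2 (by nlinarith [hx.2])
    obtain ⟨m, hm⟩ : ∃ m, ⌈(r:ℝ) * x⌉₊ = m + 1 := ⟨_, (Nat.succ_pred_eq_of_pos h1).symm⟩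
    have h3 : ((idx x : Fin r) : ℕ) = m := by
      simp only [hidx, hm]
      simp
      exact Nat.mod_eq_of_lt (by omega)
    simp only [II, mem_Ioc, h3]
    rw [div_lt_iff₀ hr, le_div_iff₀ hr]
    rw [Nat.ceil_eq_iff (by omega)] at hm
    push_cast at hm
    constructor <;> linarith [hm.1, hm.2]
  have hU : (⋃ i, II r i) = Ioc (0:ℝ) 1 := by
    ext x
    simp only [mem_iUnion]
    constructor
    · rintro ⟨i, hi⟩
      simp only [II, mem_Ioc] at hi
      refine ⟨lt_of_le_of_lt (by positivity) hi.1, hi.2.trans ?_⟩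
      rw [div_le_one hr]
      exact_mod_cast i.2
    · exact fun hx => ⟨_, hI2 x hx⟩
  have hmu : mu = Measure.sum fun i => volume.restrict (II r i) := by
    rw [← Measure.restrict_iUnion _ (II_meas r), hU]
    · exact (Measure.restrict_congr_set Ioc_ae_eq_Icc).symm
    · intro i j hij
      rw [Function.onFun, Set.disjoint_left]
      intro x hi hj
      exact hij ((hI i x hi).symm.trans (hI j x hj))
  have hmu2 : (Measure.sum fun i => mu.restrict (c ⁻¹' {i})) = mu := by
    rw [← Measure.restrict_iUnion _ (fun i => hc (measurableSet_singleton i))]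
    · have : (⋃ i, c ⁻¹' {i}) = univ := by ext x; simp
      rw [this, Measure.restrict_univ]
    · intro i j hij
      rw [Function.onFun, Set.disjoint_left]
      intro x hi hj
      exact hij (Eq.trans (Eq.symm hi) hj)
  have hgi : Measurable (fun x => g (idx x) x) := by
    have : Measurable (fun q : Fin r × ℝ => g q.1 q.2) :=
      measurable_from_prod_countable_right fun i => hgm i
    exact this.comp (hidxm.prodMk measurable_id)
  set σ : ℝ → ℝ := fun x => max 0 (min 1 (g (idx x) x)) with hσ
  have hσm : Measurable σ := measurable_const.max (measurable_const.min hgi)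
  have hmapi : ∀ i, (volume.restrict (II r i)).map σ = mu.restrict (c ⁻¹' {i}) := by
    intro i
    rw [← hg i]
    refine Measure.map_congr ?_
    have h1 : ∀ᵐ y ∂((volume.restrict (II r i)).map (g i)), y ∈ Icc (0:ℝ) 1 := by
      rw [hg i]
      refine ae_restrict_of_ae ?_
      exact ae_restrict_mem measurableSet_Icc
    have h2 := ae_of_ae_map (hgm i).aemeasurable h1
    filter_upwards [h2, ae_restrict_mem (II_meas r i)] with x hx hxi
    simp only [hσ, hI i x hxi]
    rw [min_eq_right hx.2, max_eq_right hx.1]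
  have hmap : mu.map σ = mu := by
    conv_lhs => rw [hmu]
    rw [Measure.map_sum hσm.aemeasurable]
    simp_rw [hmapi]
    exact hmu2
  refine ⟨σ, idx, ⟨⟨hσm, hmap⟩, fun x _ => ?_⟩, hσm, hidxm, hI, hI2, ?_⟩
  · exact ⟨le_max_left _ _, max_le zero_le_one (min_le_left _ _)⟩
  · rw [hmu, Measure.ae_sum_iff]
    intro i
    have h1 : ∀ᵐ y ∂((volume.restrict (II r i)).map σ), c y = i := by
      rw [hmapi i]
      exact ae_restrict_mem (hc (measurableSet_singleton i))
    filter_upwards [ae_of_ae_map hσm.aemeasurable h1, ae_restrict_mem (II_meas r i)] with x hx hxi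
    rw [hx, hI i x hxi]

end Rearrange

section Final

lemma randIndicator_zo {W : ℝ → ℝ → ℝ} (hW : IsGraphon W) : ZO (randIndicator W) where
  symm := fun x y => by simp only [randIndicator, hW.1 x y]
  meas := Measurable.ite ((measurableSet_lt measurable_const hW.2.1).inter
    (measurableSet_lt hW.2.1 measurable_const)) measurable_const measurable_const
  zo := fun x y => by
    unfold randIndicator
    split_ifs <;> simp

lemma cf_of_kfree {n : ℕ} {a : ℝ → ℝ → ℝ} (h : KFree n a) : CF n mu a := by
  unfold CF
  unfold KFree at h
  rw [volume_pi, Measure.restrict_pi_pi] at h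
  unfold mu
  filter_upwards [h] with x hx
  obtain ⟨i, _, hi⟩ := Finset.prod_eq_zero_iff.1 hx
  obtain ⟨j, _, hj⟩ := Finset.prod_eq_zero_iff.1 hi
  by_cases hij : i < j
  · rw [if_pos hij] at hj
    exact ⟨i, j, hij, hj⟩
  · rw [if_neg hij] at hj
    exact absurd hj one_ne_zero

lemma binEnt_eq (x : ℝ) : binEnt x = Real.binEntropy x / Real.log 2 := by
  unfold binEnt Real.binEntropy Real.logb
  rw [Real.log_inv, Real.log_inv]
  ring

lemma binEnt_meas : Measurable binEnt := by
  have : binEnt = fun x => Real.binEntropy x / Real.log 2 := funext binEnt_eq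
  rw [this]
  exact Real.binEntropy_continuous.measurable.div_const _

lemma binEnt_le (x : ℝ) : binEnt x ≤ 1 := by
  rw [binEnt_eq, div_le_one (Real.log_pos one_lt_two)]
  exact Real.binEntropy_le_log_two

lemma binEnt_eq_one (x : ℝ) : binEnt x = 1 ↔ x = 1 / 2 := by
  rw [binEnt_eq, div_eq_one_iff_eq (Real.log_pos one_lt_two).ne', Real.binEntropy_eq_log_two,
    one_div]

lemma binEnt_zero : binEnt 0 = 0 := by simp [binEnt]

lemma binEnt_one : binEnt 1 = 0 := by simp [binEnt]

lemma binEnt_nonneg {x : ℝ} (h : x ∈ Icc (0:ℝ) 1) : 0 ≤ binEnt x := by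
  rw [binEnt_eq]
  exact div_nonneg (Real.binEntropy_nonneg h.1 h.2) (Real.log_pos one_lt_two).le

lemma binEnt_int {W : ℝ → ℝ → ℝ} (hW : IsGraphon W) :
    Integrable (fun p : ℝ × ℝ => binEnt (W p.1 p.2)) (mu.prod mu) :=
  bddInt (binEnt_meas.comp hW.2.1) 1 fun p => by
    rw [abs_of_nonneg (binEnt_nonneg (hW.2.2 _ _))]
    exact binEnt_le _

lemma graphonEnt_eq {W : ℝ → ℝ → ℝ} (hW : IsGraphon W) :
    graphonEnt W = ∫ p, binEnt (W p.1 p.2) ∂(mu.prod mu) := by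
  rw [integral_prod _ (binEnt_int hW)]
  rfl

lemma zo_int {a : ℝ → ℝ → ℝ} (ha : ZO a) :
    Integrable (fun p : ℝ × ℝ => a p.1 p.2) (mu.prod mu) :=
  bddInt ha.meas 1 fun p => ha.abs_le _ _

lemma dg_int {a : ℝ → ℝ → ℝ} (ha : ZO a) :
    ∫ x, dg mu a x ∂mu = ∫ p, a p.1 p.2 ∂(mu.prod mu) := by
  rw [integral_prod _ (zo_int ha)]
  rfl

lemma W_of_zero {W : ℝ → ℝ → ℝ} (hW : IsGraphon W) {x y : ℝ} (h : randIndicator W x y = 0) :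
    W x y = 0 ∨ W x y = 1 := by
  unfold randIndicator at h
  have h01 := hW.2.2 x y
  by_contra hc
  push Not at hc
  rw [if_pos ⟨lt_of_le_of_ne h01.1 (Ne.symm hc.1), lt_of_le_of_ne h01.2 hc.2⟩] at h
  exact one_ne_zero h

lemma binEnt_le_rand {W : ℝ → ℝ → ℝ} (hW : IsGraphon W) (x y : ℝ) :
    binEnt (W x y) ≤ randIndicator W x y := by
  rcases (randIndicator_zo hW).zo x y with h | h
  · rw [h]
    rcases W_of_zero hW h with h | h <;> rw [h]
    · exact binEnt_zero.le
    · exact binEnt_one.le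
  · rw [h]; exact binEnt_le _

lemma q_le_rand {W : ℝ → ℝ → ℝ} (hW : IsGraphon W) (x y : ℝ) :
    4 * (W x y * (1 - W x y)) ≤ randIndicator W x y := by
  rcases (randIndicator_zo hW).zo x y with h | h
  · rw [h]
    rcases W_of_zero hW h with h | h <;> rw [h] <;> norm_num
  · rw [h]; nlinarith [sq_nonneg (2 * W x y - 1)]

lemma Er_iff (r : ℕ) (x y : ℝ) : (x, y) ∈ Er r ↔ ∃ i j : Fin r, i ≠ j ∧ x ∈ II r i ∧ y ∈ II r j := by
  simp only [Er, mem_iUnion, mem_prod, II, exists_prop]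

lemma Er_meas (r : ℕ) : MeasurableSet (Er r) := by
  unfold Er
  exact MeasurableSet.iUnion fun i => MeasurableSet.iUnion fun j => MeasurableSet.iUnion fun _ =>
    measurableSet_Ioc.prod measurableSet_Ioc

lemma Er_symm (r : ℕ) (x y : ℝ) : (x, y) ∈ Er r ↔ (y, x) ∈ Er r := by
  rw [Er_iff, Er_iff]
  constructor <;> rintro ⟨i, j, h, hi, hj⟩ <;> exact ⟨j, i, h.symm, hj, hi⟩

/-- The rearranged graphon. -/
lemma exists_W' {W : ℝ → ℝ → ℝ} (hW : IsGraphon W) (k : ℕ) {σ : ℝ → ℝ} (hσ : IsMPSelf σ)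
    (hσm : Measurable σ)
    (hoff : ∀ᵐ p ∂(mu.prod mu), (p ∈ Er (k+1) → W (σ p.1) (σ p.2) = 1 / 2) ∧
      (p ∉ Er (k+1) → W (σ p.1) (σ p.2) = 0 ∨ W (σ p.1) (σ p.2) = 1)) :
    ∃ W' ∈ Rset (k+1), deltaCut W W' = 0 := by
  classical
  set V : ℝ → ℝ → ℝ := fun x y => W (σ x) (σ y) with hV
  have hVg : IsGraphon V := comp_graphon hW hσm
  set W' : ℝ → ℝ → ℝ := fun x y => if (x, y) ∈ Er (k+1) then 1 / 2 else
    if V x y = 1 then 1 else 0 with hW'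
  have hW'm : Measurable (Function.uncurry W') := by
    refine Measurable.ite (Er_meas _) measurable_const ?_
    exact Measurable.ite (hVg.2.1 (measurableSet_singleton 1)) measurable_const measurable_const
  refine ⟨W', ⟨⟨?_, hW'm, ?_⟩, ?_, ?_⟩, ?_⟩
  · intro x y
    simp only [hW', Er_symm _ x y, hVg.1 x y]
  · intro x y
    simp only [hW']
    split_ifs <;> constructor <;> norm_num
  · rintro ⟨x, y⟩ hp
    simp only [hW', if_pos hp]
  · rintro ⟨x, y⟩ hp
    simp only [hW', if_neg hp.2]
    split_ifs <;> simp
  · have hae : ∀ᵐ p ∂(mu.prod mu), V p.1 p.2 - W' p.1 p.2 = 0 := by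
      filter_upwards [hoff] with p hp
      by_cases h : p ∈ Er (k+1)
      · have h1 := hp.1 h
        simp only [hW', hV, Prod.mk.eta, if_pos h, h1, sub_self]
      · have h1 := hp.2 h
        simp only [hW', hV, Prod.mk.eta, if_neg h]
        rcases h1 with h1 | h1 <;> simp [h1]
    have hid : IsMPSelf id := ⟨MeasurePreserving.id _, mapsTo_id _⟩
    have hc : cutNorm (fun x y => W (σ x) (σ y) - W' (id x) (id y)) = 0 := by
      refine le_antisymm ?_ (cutNorm_nonneg _)
      refine Real.sSup_le ?_ le_rfl
      rintro _ ⟨S, T, hS, hT, hS1, hT1, rfl⟩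
      have : ∫ p in S ×ˢ T, (W (σ p.1) (σ p.2) - W' (id p.1) (id p.2)) = 0 := by
        refine integral_eq_zero_of_ae ?_
        rw [mu_prod] at hae
        exact ae_restrict_of_ae_restrict_of_subset (Set.prod_mono hS1 hT1) hae
      rw [this, abs_zero]
    refine le_antisymm ?_ ?_
    · refine csInf_le ⟨0, ?_⟩ ⟨σ, id, hσ, hid, hc.symm⟩
      rintro _ ⟨_, _, _, _, rfl⟩
      exact cutNorm_nonneg _
    · refine Real.sInf_nonneg ?_
      rintro _ ⟨_, _, _, _, rfl⟩
      exact cutNorm_nonneg _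

lemma mu_Ioc : ∀ᵐ x ∂mu, x ∈ Ioc (0:ℝ) 1 := by
  have : mu = volume.restrict (Ioc (0:ℝ) 1) := (Measure.restrict_congr_set Ioc_ae_eq_Icc).symm
  rw [this]
  exact ae_restrict_mem measurableSet_Ioc

lemma forward {W : ℝ → ℝ → ℝ} (hW : IsGraphon W) (k : ℕ) (hcf : CF (k+2) mu (randIndicator W))
    (hp : ∫ p, randIndicator W p.1 p.2 ∂(mu.prod mu) ≤ 1 - 1 / ((k:ℝ)+1))
    (he : graphonEnt W = 1 - 1 / ((k:ℝ)+1)) : ∃ W' ∈ Rset (k+1), deltaCut W W' = 0 := by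
  classical
  have ha := randIndicator_zo hW
  rw [graphonEnt_eq hW] at he
  have hle : ∫ p, binEnt (W p.1 p.2) ∂(mu.prod mu) ≤
      ∫ p, randIndicator W p.1 p.2 ∂(mu.prod mu) :=
    integral_mono (binEnt_int hW) (zo_int ha) fun p => binEnt_le_rand hW _ _
  have heq : ∫ p, randIndicator W p.1 p.2 ∂(mu.prod mu) = 1 - 1 / ((k:ℝ)+1) := by linarith
  have hae := (integral_eq_iff_of_ae_le (binEnt_int hW) (zo_int ha)
    (Eventually.of_forall fun p => binEnt_le_rand hW p.1 p.2)).1 (he.trans heq.symm)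
  obtain ⟨c, hc, hcm, hca⟩ := extremal2 mu ha k hcf ((dg_int ha).trans heq)
  obtain ⟨σ, idx, hσ, hσm, hidx, hI, hI2, hcσ⟩ := exists_rearr (k+1) c hc
    (fun i => by rw [hcm i]; push_cast; rfl)
  refine exists_W' hW k hσ hσm ?_
  have hcm2 : Measurable fun p : ℝ × ℝ => (c p.1, c p.2) :=
    (hc.comp measurable_fst).prodMk (hc.comp measurable_snd)
  have hca2 : ∀ᵐ p ∂(mu.prod mu),
      randIndicator W p.1 p.2 = if c p.1 = c p.2 then 0 else 1 := by
    refine (Measure.ae_prod_iff_ae_ae ?_).2 hca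
    refine measurableSet_eq_fun ha.meas ?_
    exact Measurable.ite (measurableSet_eq_fun (hc.comp measurable_fst) (hc.comp measurable_snd))
      measurable_const measurable_const
  have q1 := hσ.prod.quasiMeasurePreserving.ae hae
  have q2 := hσ.prod.quasiMeasurePreserving.ae hca2
  have f1 := (measurePreserving_fst (μ := mu) (ν := mu)).quasiMeasurePreserving.ae (hcσ.and mu_Ioc)
  have f2 := (measurePreserving_snd (μ := mu) (ν := mu)).quasiMeasurePreserving.ae (hcσ.and mu_Ioc)
  filter_upwards [q1, q2, f1, f2] with p h1 h2 h3 h4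
  obtain ⟨x, y⟩ := p
  simp only [Prod.map_apply] at h1 h2 h3 h4 ⊢
  have hE : (x, y) ∈ Er (k+1) ↔ c (σ x) ≠ c (σ y) := by
    rw [Er_iff, h3.1, h4.1]
    constructor
    · rintro ⟨i, j, hij, hi, hj⟩
      rw [hI i x hi, hI j y hj]
      exact hij
    · intro h
      exact ⟨_, _, h, hI2 x h3.2, hI2 y h4.2⟩
  rw [hE]
  constructor
  · intro h
    rw [if_neg h] at h2
    rw [h2] at h1
    exact (binEnt_eq_one _).1 h1
  · intro h
    rw [if_pos (not_not.1 h)] at h2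
    exact W_of_zero hW h2

lemma II_cover (k : ℕ) (x : ℝ) (hx : x ∈ Ioc (0:ℝ) 1) : ∃ i, x ∈ II (k+1) i := by
  have hr : (0:ℝ) < ((k+1 : ℕ) : ℝ) := by positivity
  have h0 : 0 < ((k+1 : ℕ) : ℝ) * x := mul_pos hr hx.1
  have h1 : 0 < ⌈((k+1 : ℕ) : ℝ) * x⌉₊ := Nat.ceil_pos.2 h0
  have h2 : ⌈((k+1 : ℕ) : ℝ) * x⌉₊ ≤ k + 1 := Nat.ceil_le.2 (by nlinarith [hx.2])
  obtain ⟨m, hm⟩ : ∃ m, ⌈((k+1 : ℕ) : ℝ) * x⌉₊ = m + 1 := ⟨_, (Nat.succ_pred_eq_of_pos h1).symm⟩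
  refine ⟨⟨m, by omega⟩, ?_⟩
  simp only [II, mem_Ioc]
  rw [div_lt_iff₀ hr, le_div_iff₀ hr]
  rw [Nat.ceil_eq_iff (by omega)] at hm
  push_cast at hm ⊢
  constructor <;> linarith [hm.1, hm.2]

lemma Er_measure (k : ℕ) : 1 - 1 / ((k:ℝ)+1) ≤ ∫ p, (Er (k+1)).indicator (fun _ => (1:ℝ)) p ∂(mu.prod mu) := by
  rw [integral_indicator_const _ (Er_meas _), smul_eq_mul, mul_one]
  have hsub : (univ : Set (ℝ × ℝ)) ≤ᵐ[mu.prod mu]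
      (Er (k+1) ∪ ⋃ i : Fin (k+1), II (k+1) i ×ˢ II (k+1) i : Set (ℝ × ℝ)) := by
    have f1 := (measurePreserving_fst (μ := mu) (ν := mu)).quasiMeasurePreserving.ae mu_Ioc
    have f2 := (measurePreserving_snd (μ := mu) (ν := mu)).quasiMeasurePreserving.ae mu_Ioc
    filter_upwards [f1, f2] with p h1 h2 _
    obtain ⟨x, y⟩ := p
    obtain ⟨i, hi⟩ := II_cover k x h1
    obtain ⟨j, hj⟩ := II_cover k y h2
    by_cases hij : i = j
    · subst hij
      exact Or.inr (mem_iUnion.2 ⟨i, hi, hj⟩)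
    · exact Or.inl ((Er_iff _ _ _).2 ⟨i, j, hij, hi, hj⟩)
  have h1 : 1 ≤ (mu.prod mu).real (Er (k+1) ∪ ⋃ i : Fin (k+1), II (k+1) i ×ˢ II (k+1) i) := by
    have := ENNReal.toReal_mono (measure_ne_top _ _) (measure_mono_ae hsub)
    simpa [measureReal_def] using this
  have h2 := measureReal_union_le (μ := mu.prod mu) (Er (k+1)) (⋃ i : Fin (k+1), II (k+1) i ×ˢ II (k+1) i)
  have h3 := measureReal_iUnion_fintype_le (μ := mu.prod mu) (fun i : Fin (k+1) => II (k+1) i ×ˢ II (k+1) i)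
  have h4 : ∀ i : Fin (k+1), (mu.prod mu).real (II (k+1) i ×ˢ II (k+1) i) ≤ 1 / ((k:ℝ)+1) * (1 / ((k:ℝ)+1)) := by
    intro i
    have h5 : mu.real (II (k+1) i) ≤ 1 / ((k:ℝ)+1) := by
      have : mu.real (II (k+1) i) ≤ volume.real (II (k+1) i) := by
        refine ENNReal.toReal_mono ?_ (Measure.restrict_apply_le _ _)
        simp [II]
      refine this.trans ?_
      unfold II
      rw [Real.volume_real_Ioc]
      push_cast
      rw [← sub_div]
      refine max_le ?_ (by positivity)
      apply le_of_eq; ring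
    rw [measureReal_prod_prod]
    exact mul_le_mul h5 h5 measureReal_nonneg (by positivity)
  have h6 := Finset.sum_le_sum fun i (_ : i ∈ Finset.univ) => h4 i
  simp only [Finset.sum_const, Finset.card_univ, Fintype.card_fin, nsmul_eq_mul] at h6
  push_cast at h6
  have h7 : ((k:ℝ)+1) * (1 / ((k:ℝ)+1) * (1 / ((k:ℝ)+1))) = 1 / ((k:ℝ)+1) := by
    field_simp
  linarith

lemma backward {W W' : ℝ → ℝ → ℝ} (hW : IsGraphon W) (k : ℕ)
    (hp : ∫ p, randIndicator W p.1 p.2 ∂(mu.prod mu) ≤ 1 - 1 / ((k:ℝ)+1))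
    (hW' : W' ∈ Rset (k+1)) (hd : deltaCut W W' = 0) : graphonEnt W = 1 - 1 / ((k:ℝ)+1) := by
  have ha := randIndicator_zo hW
  have h1 := q_le_of_delta hW hW'.1 hd
  have h2 : ∫ p, (Er (k+1)).indicator (fun _ => (1:ℝ)) p ∂(mu.prod mu) ≤
      ∫ p, 4 * (W' p.1 p.2 * (1 - W' p.1 p.2)) ∂(mu.prod mu) := by
    refine integral_mono ((integrable_const _).indicator (Er_meas _))
      ((q_int hW'.1).const_mul 4) fun p => ?_
    by_cases h : p ∈ Er (k+1)
    · simp only [indicator_of_mem h, hW'.2.1 p h]; norm_num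
    · simp only [indicator_of_notMem h]
      have := hW'.1.2.2 p.1 p.2
      have := mul_nonneg this.1 (sub_nonneg.2 this.2)
      linarith
  have h3 := Er_measure k
  have h4 : ∫ p, 4 * (W p.1 p.2 * (1 - W p.1 p.2)) ∂(mu.prod mu) ≤
      ∫ p, randIndicator W p.1 p.2 ∂(mu.prod mu) :=
    integral_mono ((q_int hW).const_mul 4) (zo_int ha) fun p => q_le_rand hW _ _
  rw [integral_const_mul] at h2
  have h5 := h4
  rw [integral_const_mul] at h5
  have heq : ∫ p, 4 * (W p.1 p.2 * (1 - W p.1 p.2)) ∂(mu.prod mu) =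
      ∫ p, randIndicator W p.1 p.2 ∂(mu.prod mu) := by
    refine le_antisymm h4 ?_
    rw [integral_const_mul]
    linarith
  have hae := (integral_eq_iff_of_ae_le ((q_int hW).const_mul 4) (zo_int ha)
    (Eventually.of_forall fun p => q_le_rand hW p.1 p.2)).1 heq
  have h6 : ∫ p, binEnt (W p.1 p.2) ∂(mu.prod mu) =
      ∫ p, randIndicator W p.1 p.2 ∂(mu.prod mu) := by
    refine integral_congr_ae ?_
    filter_upwards [hae] with p h
    rcases ha.zo p.1 p.2 with h0 | h0
    · simp only [h0]
      rcases W_of_zero hW h0 with h0 | h0 <;> rw [h0]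
      · exact binEnt_zero
      · exact binEnt_one
    · simp only [h0] at h ⊢
      rw [binEnt_eq_one]
      have : (2 * W p.1 p.2 - 1) ^ 2 = 0 := by linarith
      have := pow_eq_zero_iff (two_ne_zero) |>.1 this
      linarith
  rw [graphonEnt_eq hW, h6]
  linarith

end Final

/-- Lemma 7.3: if the randomness support graphon of `W` is
`K_{r+1}`-free, then `Ent(W) ≤ 1 - 1/r`, with equality iff `W` is equivalent to a
graphon in `R_r`. -/
theorem stmt15 (r : ℕ) (hr : 1 ≤ r) (W : ℝ → ℝ → ℝ) (hW : IsGraphon W)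
    (hfree : KFree (r + 1) (randIndicator W)) :
    graphonEnt W ≤ 1 - 1 / (r : ℝ) ∧
      (graphonEnt W = 1 - 1 / (r : ℝ) ↔ ∃ W' ∈ Rset r, deltaCut W W' = 0) := by
  obtain ⟨k, rfl⟩ : ∃ k, r = k + 1 := ⟨r - 1, by omega⟩
  have ha := randIndicator_zo hW
  have hcf : CF (k + 1 + 1) mu (randIndicator W) := cf_of_kfree hfree
  have ht := turan ha (k + 1) mu hcf
  rw [dg_int ha] at ht
  have hk : (0:ℝ) < (k:ℝ) + 1 := by positivity
  have hp : ∫ p, randIndicator W p.1 p.2 ∂(mu.prod mu) ≤ 1 - 1 / ((k:ℝ)+1) := by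
    rw [probReal_univ] at ht
    push_cast at ht
    have e : (1:ℝ) - 1 / ((k:ℝ)+1) = k / ((k:ℝ)+1) := by field_simp; ring
    rw [e, le_div_iff₀ hk]
    linarith
  push_cast
  refine ⟨?_, fun he => forward hW k hcf hp he, fun ⟨W', h1, h2⟩ => backward hW k hp h1 h2⟩
  rw [graphonEnt_eq hW]
  exact (integral_mono (binEnt_int hW) (zo_int ha) fun p => binEnt_le_rand hW _ _).trans hp

end
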